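/- arXiv:1201.2861 — 2 statements merged into one kernel-verified Lean document; each statement's English description precedes it below -/
import Mathlib

section
/- Let f:[0,1]→[0,1] be continuous and piecewise monotone with a unique fixed point a. Let c∈[0,1] satisfy c<a and f(c)>a, suppose f^n(c)≤c for some integer n≥1, and additionally f^{n+1}(c)≤a. Let p be the number of indices i with 0≤i≤n−1 such that f^i(c) and f^{i+1}(c) lie on opposite sides of a. Then for every pair of positive integers (r,s) with r/s=p/(2n), f has a periodic point of over-rotation pair (r,s). -/
open Set Function

/-- The function χ_g: 1/2 where (g(x)−x)(g(g(x))−g(x)) ≤ 0, and 0 otherwise. -/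
noncomputable def chi (g : ℝ → ℝ) (x : ℝ) : ℝ :=
  if (g x - x) * (g (g x) - g x) ≤ 0 then 1 / 2 else 0

/-- Over-rotation number of a periodic point `y` of `g`. -/
noncomputable def overRotNum (g : ℝ → ℝ) (y : ℝ) : ℝ :=
  (∑ i ∈ Finset.range (Function.minimalPeriod g y), chi g (g^[i] y)) /
    (Function.minimalPeriod g y : ℝ)

/-- The over-rotation interval of `g` on the domain `s`: the closure of the set of
over-rotation numbers of periodic non-fixed points of `g` in `s`. -/
def overRotInterval (g : ℝ → ℝ) (s : Set ℝ) : Set ℝ :=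
  closure { r : ℝ | ∃ y ∈ s, y ∈ Function.periodicPts g ∧ g y ≠ y ∧ overRotNum g y = r }

/-- `f` is piecewise monotone on `[a,b]`. -/
def PiecewiseMonotoneOn (f : ℝ → ℝ) (a b : ℝ) : Prop :=
  ∃ n : ℕ, ∃ t : Fin (n + 1) → ℝ, StrictMono t ∧ t 0 = a ∧ t (Fin.last n) = b ∧
    ∀ i : Fin n, MonotoneOn f (Set.Icc (t i.castSucc) (t i.succ)) ∨
      AntitoneOn f (Set.Icc (t i.castSucc) (t i.succ))


/-!
Seen from the fixed point `a`, suppose that `z` lies at or beyond `c`, that the `n`-th image of `c`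
lies at or beyond `z`, and that `f` maps `c` and `z` to different sides of `a`: a fold of length
`n`. Then the interval from `z` to `c` and the interval from `a` to `c` each cover both of them in
`n` steps, along intervals on the sides of `a` visited by the orbit of `c`. Visiting the first
interval once and the second one `j - 1` times gives a point `x` with `f^[j * n] x = x` whose orbit
crosses `a` exactly `j` times as often as the first `n` steps of the orbit of `c`. If the number of
crossings in these steps is `2 * q` with `q` coprime to `n`, this point has minimal period `j * n`.

If instead the number of crossings is `k * b` with `b` even and `n = k * d`, there is a fold of
length `d` with `b` crossings. Take the periodic point for `j = 1` and count the crossings in the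
windows of `d` consecutive steps of its orbit. The count changes by at most one when the window is
shifted by one step, and its mean is `b`. Either all counts are `b`, and then one of the blocks of
`d` steps starting from `c` is a fold; or some window with count `b` is followed by one with another
count. In the latter case the ends of the first window lie on the same side of `a` and their images
on different sides, so these ends form a fold of length `d` or `n - d`, with the same ratio of
crossings to length, and one concludes by induction on `k`.
-/

section UnorderedInterval

variable {α : Type*} [LinearOrder α] {a x y w : α}

theorem mem_uIcc_or_mem_uIcc_or_mem_uIcc (x y w : α) :
    x ∈ uIcc y w ∨ y ∈ uIcc x w ∨ w ∈ uIcc y x := by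
  simp only [mem_uIcc]
  grind

theorem lt_iff_lt_of_mem_uIcc (h : x ∈ uIcc a y) (hx : x ≠ a) : x < a ↔ y < a := by
  rw [mem_uIcc] at h
  grind

theorem mem_uIcc_or_mem_uIcc_of_lt_iff_lt (h : x < a ↔ y < a) : x ∈ uIcc a y ∨ y ∈ uIcc a x := by
  simp only [mem_uIcc]
  grind

theorem mem_uIcc_of_not_lt_iff_lt (h : ¬(x < a ↔ y < a)) : a ∈ uIcc x y := by
  rw [mem_uIcc]
  grind

theorem mem_uIcc_of_lt_iff_lt (hx : x ≠ a) (h : x < a ↔ y < a) (hxw : a ∈ uIcc x w) :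
    a ∈ uIcc y w := by
  rw [mem_uIcc] at hxw ⊢
  grind

end UnorderedInterval

section Covering

variable {α δ : Type*} [ConditionallyCompleteLinearOrder α] [TopologicalSpace α] [OrderTopology α]
  [DenselyOrdered α] [LinearOrder δ] [TopologicalSpace δ] [OrderClosedTopology δ]

theorem exists_image_uIcc_eq_uIcc_of_le {f : α → δ} {u v : α} (huv : u ≤ v)
    (hf : ContinuousOn f (Icc u v)) :
    ∃ l r, uIcc l r ⊆ Icc u v ∧ f '' uIcc l r = uIcc (f u) (f v) := by
  have compact_fiber {r : α} (hr : r ≤ v) (y : δ) : IsCompact (Icc u r ∩ f ⁻¹' {y}) :=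
    isCompact_Icc.of_isClosed_subset ((hf.mono (Icc_subset_Icc_right hr)
      ).preimage_isClosed_of_isClosed isClosed_Icc isClosed_singleton) inter_subset_left
  obtain ⟨r, ⟨hr, hfr : f r = f v⟩, hr_min⟩ :=
    (compact_fiber le_rfl (f v)).exists_isLeast ⟨v, right_mem_Icc.2 huv, rfl⟩
  obtain ⟨l, ⟨hl, hfl : f l = f u⟩, hl_max⟩ :=
    (compact_fiber hr.2 (f u)).exists_isGreatest ⟨u, left_mem_Icc.2 hr.1, rfl⟩
  have hsub : Icc l r ⊆ Icc u v := Icc_subset_Icc hl.1 hr.2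
  rw [← uIcc_of_le hl.2] at hsub
  refine ⟨l, r, hsub, Subset.antisymm ?_ ?_⟩
  · rintro _ ⟨x, hx, rfl⟩
    have hxr : uIcc x r ⊆ uIcc l r := uIcc_subset_uIcc_right hx
    have hlx : uIcc l x ⊆ uIcc l r := uIcc_subset_uIcc_left hx
    rw [uIcc_of_le hl.2] at hx
    rcases mem_uIcc_or_mem_uIcc_or_mem_uIcc (f x) (f u) (f v) with h | h | h
    · exact h
    · rw [← hfr] at h
      obtain ⟨y, hy, hfy⟩ := intermediate_value_uIcc (hf.mono (hxr.trans hsub)) h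
      rw [uIcc_of_le hx.2] at hy
      have hyl : y ≤ l := hl_max ⟨⟨hl.1.trans (hx.1.trans hy.1), hy.2⟩, hfy⟩
      rw [le_antisymm (hy.1.trans hyl) hx.1, hfl]
      exact left_mem_uIcc
    · rw [← hfl] at h
      obtain ⟨y, hy, hfy⟩ := intermediate_value_uIcc (hf.mono (hlx.trans hsub)) h
      rw [uIcc_of_le hx.1] at hy
      have hry : r ≤ y := hr_min ⟨⟨hl.1.trans hy.1, (hy.2.trans hx.2).trans hr.2⟩, hfy⟩
      rw [le_antisymm hx.2 (hry.trans hy.2), hfr]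
      exact right_mem_uIcc
  · rw [← hfl, ← hfr]
    exact intermediate_value_uIcc (hf.mono hsub)

theorem exists_image_uIcc_eq_of_subset_image {f : α → δ} {u v : α} {p q : δ}
    (hf : ContinuousOn f (uIcc u v)) (hsub : uIcc p q ⊆ f '' uIcc u v) :
    ∃ l r, uIcc l r ⊆ uIcc u v ∧ f '' uIcc l r = uIcc p q := by
  obtain ⟨x, hx, rfl⟩ := hsub left_mem_uIcc
  obtain ⟨y, hy, rfl⟩ := hsub right_mem_uIcc
  wlog hxy : x ≤ y generalizing x y
  · rw [uIcc_comm (f x)] at hsub ⊢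
    exact this y hy x hx hsub (le_of_not_ge hxy)
  have hIcc : Icc x y ⊆ uIcc u v := Icc_subset_Icc hx.1 hy.2
  obtain ⟨l, r, hlr, himage⟩ := exists_image_uIcc_eq_uIcc_of_le hxy (hf.mono hIcc)
  exact ⟨l, r, hlr.trans hIcc, himage⟩

variable {f : α → α}

theorem exists_image_iterate_eq_of_forall_subset_image (m : ℕ) {u v : ℕ → α}
    (hf : ∀ i, ContinuousOn f (uIcc (u i) (v i)))
    (hcov : ∀ i, uIcc (u (i + 1)) (v (i + 1)) ⊆ f '' uIcc (u i) (v i)) :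
    ∃ l r, ContinuousOn f^[m] (uIcc l r) ∧
      (∀ i ≤ m, MapsTo f^[i] (uIcc l r) (uIcc (u i) (v i))) ∧
      f^[m] '' uIcc l r = uIcc (u m) (v m) := by
  induction m generalizing u v with
  | zero =>
    refine ⟨u 0, v 0, continuousOn_id, fun i hi => ?_, image_id _⟩
    rw [Nat.le_zero.1 hi]
    exact mapsTo_id _
  | succ m ih =>
    obtain ⟨p, q, hcont, hmaps, himage⟩ := ih (fun i => hf (i + 1)) (fun i => hcov (i + 1))
    obtain ⟨l, r, hlr, hlr_image⟩ := exists_image_uIcc_eq_of_subset_image (hf 0)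
      (Subset.trans (hmaps 0 m.zero_le) (hcov 0))
    have hfirst : MapsTo f (uIcc l r) (uIcc p q) := hlr_image ▸ mapsTo_image f _
    refine ⟨l, r, ?_, ?_, ?_⟩
    · exact hcont.comp ((hf 0).mono hlr) hfirst
    · rintro (_ | i) hi
      · exact hlr
      · exact (hmaps i (Nat.le_of_succ_le_succ hi)).comp hfirst
    · rw [iterate_succ, image_comp, hlr_image, himage]

theorem exists_isPeriodicPt_of_forall_subset_image {m : ℕ} (hm : 0 < m) {u v : ℕ → α}
    (hu : Periodic u m) (hv : Periodic v m) (hf : ∀ i, ContinuousOn f (uIcc (u i) (v i)))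
    (hcov : ∀ i, uIcc (u (i + 1)) (v (i + 1)) ⊆ f '' uIcc (u i) (v i)) :
    ∃ x, IsPeriodicPt f m x ∧ ∀ i, f^[i] x ∈ uIcc (u i) (v i) := by
  obtain ⟨l, r, hcont, hmaps, himage⟩ := exists_image_iterate_eq_of_forall_subset_image m hf hcov
  have hsurj : SurjOn f^[m] (uIcc l r) (uIcc l r) := by
    rw [SurjOn, himage, hu.eq, hv.eq]
    exact hmaps 0 m.zero_le
  obtain ⟨x, hx, hper : IsPeriodicPt f m x⟩ := exists_mem_uIcc_isFixedPt_of_surjOn hcont hsurj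
  refine ⟨x, hper, fun i => ?_⟩
  rw [← hper.iterate_mod_apply, ← hu.map_mod_nat, ← hv.map_mod_nat]
  exact hmaps _ (Nat.mod_lt i hm).le hx

theorem lt_apply_of_lt_of_unique_fixedPt {l u a x : α} (hf : ContinuousOn f (Icc l u))
    (hmaps : MapsTo f (Icc l u) (Icc l u)) (huniq : ∀ y ∈ Icc l u, f y = y → y = a)
    (hx : x ∈ Icc l u) (hxa : x < a) : x < f x := by
  by_contra! hle
  have hsub : Icc l x ⊆ Icc l u := Icc_subset_Icc_right hx.2
  obtain ⟨y, hy, hfy⟩ := exists_mem_Icc_isFixedPt (hf.mono hsub) hx.1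
    (hmaps (left_mem_Icc.2 (hx.1.trans hx.2))).1 hle
  exact (hy.2.trans_lt hxa).ne (huniq y (hsub hy) hfy)

theorem apply_lt_of_lt_of_unique_fixedPt {l u a x : α} (hf : ContinuousOn f (Icc l u))
    (hmaps : MapsTo f (Icc l u) (Icc l u)) (huniq : ∀ y ∈ Icc l u, f y = y → y = a)
    (hx : x ∈ Icc l u) (hax : a < x) : f x < x := by
  by_contra! hle
  have hsub : Icc x u ⊆ Icc l u := Icc_subset_Icc_left hx.1
  obtain ⟨y, hy, hfy⟩ := exists_mem_Icc_isFixedPt (hf.mono hsub) hx.2 hle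
    (hmaps (right_mem_Icc.2 (hx.1.trans hx.2))).2
  exact (hax.trans_le hy.1).ne' (huniq y (hsub hy) hfy)

end Covering

section NaturalNumbers

theorem exists_eq_of_sum_eq_card_mul {w : ℕ → ℕ} (hup : ∀ i, w (i + 1) ≤ w i + 1)
    (hdown : ∀ i, w i ≤ w (i + 1) + 1) {ι : Type*} {t : Finset ι} (ht : t.Nonempty) {g : ι → ℕ}
    {b : ℕ} (hsum : ∑ j ∈ t, w (g j) = t.card * b) : ∃ i, w i = b := by
  by_contra! hne
  have hside (i : ℕ) : w i < b ↔ w 0 < b := by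
    induction i with
    | zero => rfl
    | succ i ih =>
      have := hup i
      have := hdown i
      have := hne i
      have := hne (i + 1)
      omega
  rw [← smul_eq_mul, ← Finset.sum_const] at hsum
  rcases lt_or_gt_of_ne (hne 0) with h | h
  · exact (Finset.sum_lt_sum_of_nonempty ht fun j _ => (hside (g j)).2 h).ne hsum
  · refine (Finset.sum_lt_sum_of_nonempty ht fun j _ => ?_).ne' hsum
    exact lt_of_le_of_ne (not_lt.1 (mt (hside (g j)).1 h.not_gt)) (hne (g j)).symm

theorem forall_of_periodic_of_forall_succ {P : ℕ → Prop} {n : ℕ} (hn : 0 < n) (hP : Periodic P n)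
    (hsucc : ∀ i, P i → P (i + 1)) {i₀ : ℕ} (h₀ : P i₀) (i : ℕ) : P i := by
  have hle : i₀ ≤ i + i₀ * n := (Nat.le_mul_of_pos_right i₀ hn).trans (Nat.le_add_left _ _)
  have hlate : P (i + i₀ * n) := Nat.le_induction h₀ (fun j _ => hsucc j) _ hle
  exact (hP.nsmul i₀ i).mp (by rwa [smul_eq_mul])

theorem exists_coprime_of_mul_eq_mul {m n r t : ℕ} (hn : 0 < n) (h : r * n = m * t) :
    ∃ q d k j, q.Coprime d ∧ m = k * q ∧ n = k * d ∧ r = j * q ∧ t = j * d := by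
  obtain ⟨q, d, hqd, hm, hn'⟩ := Nat.exists_coprime m n
  have hk : 0 < m.gcd n := Nat.gcd_pos_of_pos_right m hn
  have hd : 0 < d := Nat.pos_of_mul_pos_right (hn' ▸ hn)
  have hrt : r * d = q * t := Nat.eq_of_mul_eq_mul_right hk (by
    calc r * d * m.gcd n = r * (d * m.gcd n) := mul_assoc _ _ _
      _ = r * n := by rw [← hn']
      _ = q * m.gcd n * t := by rw [h, ← hm]
      _ = q * t * m.gcd n := by ring)
  obtain ⟨j, rfl⟩ : d ∣ t := hqd.symm.dvd_of_dvd_mul_left ⟨r, by rw [← hrt, mul_comm]⟩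
  refine ⟨q, d, m.gcd n, j, hqd, by rwa [mul_comm], by rwa [mul_comm], ?_, mul_comm d j⟩
  exact Nat.eq_of_mul_eq_mul_right hd (by rw [hrt]; ring)

end NaturalNumbers

theorem iterate_eq_of_le_of_isFixedPt {α : Type*} {f : α → α} {a x : α} {i j : ℕ}
    (hfix : IsFixedPt f a) (hi : f^[i] x = a) (hij : i ≤ j) : f^[j] x = a := by
  rw [← Nat.sub_add_cancel hij, iterate_add_apply, hi]
  exact iterate_fixed hfix _

theorem iterate_ne_of_isPeriodicPt {α : Type*} {f : α → α} {a x : α} {m : ℕ}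
    (hfix : IsFixedPt f a) (hm : 0 < m) (hx : IsPeriodicPt f m x) (hxa : x ≠ a) (i : ℕ) :
    f^[i] x ≠ a := fun hi =>
  hxa ((hx.const_mul i).eq.symm.trans
    (iterate_eq_of_le_of_isFixedPt hfix hi (Nat.le_mul_of_pos_right i hm)))

section Crossings

variable {α : Type*} [LinearOrder α]

/-- The number of steps, among the first `N` steps of the orbit of `x` under `f`, at which the orbit
passes from one side of `a` to the other. A point equal to `a` is counted as lying to the right
of `a`. -/
def crossings (f : α → α) (a x : α) (N : ℕ) : ℕ :=
  Nat.count (fun i => ¬(f^[i] x < a ↔ f^[i + 1] x < a)) N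

variable {f : α → α} {a x y : α}

theorem crossings_add (m n : ℕ) :
    crossings f a x (m + n) = crossings f a x m + crossings f a (f^[m] x) n := by
  rw [crossings, Nat.count_add]
  simp only [crossings, ← iterate_add_apply, add_comm m, add_right_comm _ m]

theorem crossings_mul_eq_sum (k d : ℕ) :
    crossings f a x (k * d) = ∑ m ∈ Finset.range k, crossings f a (f^[m * d] x) d := by
  induction k with
  | zero => simp [crossings]
  | succ k ih => rw [Nat.succ_mul, crossings_add, ih, Finset.sum_range_succ]

theorem crossings_mul_of_isPeriodicPt {m : ℕ} (hx : IsPeriodicPt f m x) (k : ℕ) :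
    crossings f a x (k * m) = k * crossings f a x m := by
  simp only [crossings_mul_eq_sum, (hx.const_mul _).eq, Finset.sum_const, Finset.card_range,
    smul_eq_mul]

theorem crossings_iterate_of_isPeriodicPt {m : ℕ} (hx : IsPeriodicPt f m x) (i : ℕ) :
    crossings f a (f^[i] x) m = crossings f a x m := by
  have h := crossings_add (f := f) (a := a) (x := x) i m
  rw [add_comm i, crossings_add, hx.eq] at h
  omega

theorem crossings_one_add_crossings_apply (d : ℕ) :
    crossings f a x 1 + crossings f a (f x) d =
      crossings f a x d + crossings f a (f^[d] x) 1 := by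
  rw [← crossings_add, add_comm d, crossings_add, iterate_one]

theorem crossings_congr {N : ℕ} (h : ∀ i ≤ N, f^[i] x < a ↔ f^[i] y < a) :
    crossings f a x N = crossings f a y N := by
  simp only [crossings, Nat.count_eq_card_filter_range]
  congr 1
  refine Finset.filter_congr fun i hi => ?_
  rw [Finset.mem_range] at hi
  rw [h i hi.le, h (i + 1) hi]

theorem card_filter_eq_crossings {N : ℕ} (hne : ∀ i ≤ N, f^[i] x ≠ a) :
    ((Finset.range N).filter fun i =>
      (f^[i] x < a ∧ a < f^[i + 1] x) ∨ (a < f^[i] x ∧ f^[i + 1] x < a)).card =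
        crossings f a x N := by
  rw [crossings, Nat.count_eq_card_filter_range]
  congr 1
  refine Finset.filter_congr fun i hi => ?_
  rw [Finset.mem_range] at hi
  have := hne i hi.le
  have := hne (i + 1) hi
  grind

theorem even_crossings_iff (N : ℕ) : Even (crossings f a x N) ↔ (x < a ↔ f^[N] x < a) := by
  induction N with
  | zero => simp only [crossings, Nat.count_zero, Even.zero, iterate_zero_apply]
  | succ N ih =>
    rw [crossings, Nat.count_succ, ← crossings, Nat.even_add, ih]
    split_ifs with h
    · have := Nat.not_even_one
      tauto
    · have := Even.zero (α := ℕ)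
      tauto

theorem forall_crossings_eq_or_exists_crossings_ne {k d b : ℕ} (hk : 0 < k) (hd : 0 < d)
    (hx : IsPeriodicPt f (k * d) x) (hcr : crossings f a x (k * d) = k * b) :
    (∀ i, crossings f a (f^[i] x) d = b) ∨
      ∃ i, crossings f a (f^[i] x) d = b ∧ crossings f a (f^[i + 1] x) d ≠ b := by
  by_contra! ⟨⟨i₁, hi₁⟩, hsucc⟩
  have hshift (i : ℕ) := crossings_one_add_crossings_apply (f := f) (a := a) (x := f^[i] x) d
  have hone (y : α) : crossings f a y 1 ≤ 1 := Nat.count_le _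
  have hup (i : ℕ) : crossings f a (f^[i + 1] x) d ≤ crossings f a (f^[i] x) d + 1 := by
    rw [iterate_succ_apply']
    linarith [hshift i, hone (f^[d] (f^[i] x))]
  have hdown (i : ℕ) : crossings f a (f^[i] x) d ≤ crossings f a (f^[i + 1] x) d + 1 := by
    rw [iterate_succ_apply']
    linarith [hshift i, hone (f^[i] x)]
  obtain ⟨i₀, hi₀⟩ := exists_eq_of_sum_eq_card_mul (w := fun i => crossings f a (f^[i] x) d)
    hup hdown (Finset.nonempty_range_iff.2 hk.ne') (g := (· * d)) (b := b)
    (by rw [← crossings_mul_eq_sum, hcr, Finset.card_range])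
  have hper : Periodic (fun i => crossings f a (f^[i] x) d = b) (k * d) := fun i => by
    simp only [iterate_add_apply, hx.eq]
  exact hi₁ (forall_of_periodic_of_forall_succ (Nat.mul_pos hk hd) hper hsucc hi₀ i₁)

theorem dvd_minimalPeriod_of_crossings_eq {j d q : ℕ} (hj : 0 < j) (hqd : q.Coprime d)
    (hx : IsPeriodicPt f (j * d) x) (hcr : crossings f a x (j * d) = j * (2 * q)) :
    d ∣ minimalPeriod f x := by
  set e := minimalPeriod f x
  have hex : IsPeriodicPt f e x := isPeriodicPt_minimalPeriod f x
  obtain ⟨g, hg⟩ : e ∣ j * d := hx.minimalPeriod_dvd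
  obtain ⟨D, hD⟩ : Even (crossings f a x e) := by rw [even_crossings_iff, hex.eq]
  have hgD : g * D = j * q := by
    have := crossings_mul_of_isPeriodicPt (a := a) hex g
    rw [mul_comm g, ← hg, hcr, hD] at this
    linarith
  have hDd : q * e = d * D := Nat.eq_of_mul_eq_mul_left hj (by
    calc j * (q * e) = g * D * e := by rw [← mul_assoc, hgD]
      _ = j * d * D := by rw [hg]; ring
      _ = j * (d * D) := mul_assoc _ _ _)
  exact hqd.symm.dvd_of_dvd_mul_left ⟨D, hDd⟩

end Crossings

/-- A fold of length `N`: seen from `a`, the point `z` lies at or beyond `c` on the same side, the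
`N`-th image of `c` lies at or beyond `z`, and `f` maps `c` and `z` to different sides of `a` or one
of them to `a`. -/
structure IsFold {α : Type*} [LinearOrder α] (f : α → α) (a : α) (N : ℕ) (c z : α) : Prop where
  ne : c ≠ a
  between : c ∈ uIcc a z
  returns : z ∈ uIcc a (f^[N] c)
  opposite : a ∈ uIcc (f c) (f z)

theorem isFold_or_isFold_of_crossings_ne {α : Type*} [LinearOrder α] {f : α → α} {a x : α}
    {k d : ℕ} (hx : IsPeriodicPt f ((k + 1) * d) x) (hne : ∀ i, f^[i] x ≠ a)
    (heven : Even (crossings f a x d)) (hcr : crossings f a (f x) d ≠ crossings f a x d) :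
    IsFold f a d x (f^[d] x) ∨ IsFold f a (k * d) (f^[d] x) x := by
  have hside : x < a ↔ f^[d] x < a := (even_crossings_iff d).1 heven
  have hopp : ¬(f x < a ↔ f (f^[d] x) < a) := fun hsame => hcr (by
    have hfirst : crossings f a x 1 = crossings f a (f^[d] x) 1 := crossings_congr fun i hi => by
      interval_cases i
      exacts [hside, hsame]
    have := crossings_one_add_crossings_apply (f := f) (a := a) (x := x) d
    omega)
  refine (mem_uIcc_or_mem_uIcc_of_lt_iff_lt hside).imp (fun h => ?_) (fun h => ?_)
  · exact ⟨hne 0, h, right_mem_uIcc, mem_uIcc_of_not_lt_iff_lt hopp⟩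
  · refine ⟨hne d, h, ?_, mem_uIcc_of_not_lt_iff_lt fun hsame => hopp hsame.symm⟩
    rw [← iterate_add_apply, ← Nat.succ_mul, hx.eq]
    exact right_mem_uIcc

namespace IsFold

section Order

variable {α : Type*} [LinearOrder α] {f : α → α} {a c z w x : α} {N : ℕ}

theorem right_ne (h : IsFold f a N c z) : z ≠ a := by
  rintro rfl
  exact h.ne (by simpa using h.between)

theorem right_lt_iff (h : IsFold f a N c z) : z < a ↔ c < a :=
  (lt_iff_lt_of_mem_uIcc h.between h.ne).symm

theorem iterate_lt_iff (h : IsFold f a N c z) : f^[N] c < a ↔ c < a :=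
  (lt_iff_lt_of_mem_uIcc h.returns h.right_ne).symm.trans h.right_lt_iff

theorem iterate_mod_lt_iff (h : IsFold f a N c z) {i : ℕ} (hi : i ≤ N) :
    f^[i % N] c < a ↔ f^[i] c < a := by
  rcases hi.eq_or_lt with rfl | hi
  · rw [Nat.mod_self, h.iterate_lt_iff, iterate_zero_apply]
  · rw [Nat.mod_eq_of_lt hi]

theorem iterate_ne (h : IsFold f a N c z) (hfix : IsFixedPt f a) {i : ℕ} (hi : i ≤ N) :
    f^[i] c ≠ a := fun heq => h.right_ne (by
  have hN : f^[N] c = a := iterate_eq_of_le_of_isFixedPt hfix heq hi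
  simpa [hN] using h.returns)

theorem eq_left_of_mem_uIcc (h : IsFold f a N c z) (hx : x ∈ uIcc z c)
    (hxa : x ∈ uIcc a c) : x = c := by
  have := h.between
  simp only [mem_uIcc] at *
  grind

theorem right_mem {s : Set α} (h : IsFold f a N c z) (hs : s.OrdConnected) (hmaps : MapsTo f s s)
    (ha : a ∈ s) (hcs : c ∈ s) : z ∈ s :=
  hs.uIcc_subset ha (hmaps.iterate N hcs) h.returns

theorem center_notMem_uIcc (h : IsFold f a N c z) : a ∉ uIcc z c := fun ha =>
  h.ne (eq_of_mem_uIcc_of_mem_uIcc h.between (by rwa [uIcc_comm]))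

theorem crossings_iterate_eq (h : IsFold f a N c z)
    (hside : ∀ i, f^[i] x < a ↔ f^[i % N] c < a) (m : ℕ) :
    crossings f a (f^[m * N] x) N = crossings f a c N :=
  crossings_congr fun i hi => by
    rw [← iterate_add_apply, hside, Nat.add_mul_mod_self_right, h.iterate_mod_lt_iff hi]

theorem uIcc_subset_uIcc_iterate (h : IsFold f a N c z) (hw : w = z ∨ w = a) :
    uIcc w c ⊆ uIcc a (f^[N] c) := by
  have haz : uIcc a z ⊆ uIcc a (f^[N] c) := uIcc_subset_uIcc_left h.returns
  refine uIcc_subset_uIcc ?_ (haz h.between)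
  rcases hw with rfl | rfl
  exacts [h.returns, left_mem_uIcc]

/-- If the sides of the orbit of `c` recur after `d` steps, then, cut into `k` blocks of `d` steps,
the orbit moves from within `z` to beyond `z` during some block. -/
theorem exists_isFold_of_forall_lt_iff {k d : ℕ} (h : IsFold f a (k * d) c z)
    (hfix : IsFixedPt f a) (hk : 0 < k) (hd : 0 < d)
    (hrec : ∀ i, i + d ≤ k * d → (f^[i + d] c < a ↔ f^[i] c < a)) :
    ∃ m, m * d + d ≤ k * d ∧ IsFold f a d (f^[m * d] c) z := by
  classical
  have hrec_mul (i m : ℕ) (hm : i + m * d ≤ k * d) : f^[i + m * d] c < a ↔ f^[i] c < a := by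
    induction m with
    | zero => simp
    | succ m ih =>
      rw [Nat.succ_mul, ← add_assoc] at hm ⊢
      rw [hrec _ hm, ih (by omega)]
  have hlast : z ∈ uIcc a (f^[(k - 1 + 1) * d] c) := by
    rw [Nat.sub_add_cancel hk]
    exact h.returns
  have hex : ∃ m, z ∈ uIcc a (f^[(m + 1) * d] c) := ⟨k - 1, hlast⟩
  obtain ⟨m, hbeyond, hmin⟩ := Nat.findX hex
  have hmk : m + 1 ≤ k := by
    by_contra! hkm
    exact hmin (k - 1) (by omega) hlast
  have hmd : (m + 1) * d ≤ k * d := Nat.mul_le_mul_right d hmk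
  rw [Nat.succ_mul] at hbeyond hmd
  have hwithin : f^[m * d] c ∈ uIcc a z := by
    rcases m with _ | m
    · simpa using h.between
    · refine (mem_uIcc_or_mem_uIcc_of_lt_iff_lt ?_).resolve_right (hmin m m.lt_succ_self)
      have := hrec_mul 0 (m + 1) (by omega)
      rwa [zero_add, iterate_zero_apply, ← h.right_lt_iff] at this
  refine ⟨m, hmd, h.iterate_ne hfix (by omega), hwithin, ?_, ?_⟩
  · rwa [← iterate_add_apply, add_comm]
  · rw [← iterate_succ_apply' f]
    have hside := hrec_mul 1 m (by omega)
    rw [add_comm] at hside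
    exact mem_uIcc_of_lt_iff_lt (h.iterate_ne hfix (i := 1) (by omega)) hside.symm h.opposite

theorem exists_isFold_of_forall_crossings_eq {k d b : ℕ} (h : IsFold f a (k * d) c z)
    (hfix : IsFixedPt f a) (hk : 0 < k) (hd : 0 < d) (hb : Even b)
    (hall : ∀ i, i + d ≤ k * d → crossings f a (f^[i] c) d = b) :
    ∃ m, IsFold f a d (f^[m * d] c) z ∧ crossings f a (f^[m * d] c) d = b := by
  obtain ⟨m, hm, hfold⟩ := h.exists_isFold_of_forall_lt_iff hfix hk hd fun i hi => by
    rw [add_comm, iterate_add_apply]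
    exact ((even_crossings_iff d).1 (hall i hi ▸ hb)).symm
  exact ⟨m, hfold, hall _ hm⟩

end Order

section Topology

variable {α : Type*} [ConditionallyCompleteLinearOrder α] [TopologicalSpace α] [OrderTopology α]
  [DenselyOrdered α] {f : α → α} {s : Set α} {a c z w : α} {N : ℕ}

theorem uIcc_iterate_subset_image (h : IsFold f a N c z) (hfix : IsFixedPt f a) {i : ℕ}
    (hf : ContinuousOn f (uIcc w (f^[i] c))) (hw : w = z ∧ i = 0 ∨ w = a) :
    uIcc a (f^[i + 1] c) ⊆ f '' uIcc w (f^[i] c) := by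
  refine Subset.trans (uIcc_subset_uIcc ?_ ?_) (intermediate_value_uIcc hf)
  · rcases hw with ⟨rfl, rfl⟩ | rfl
    · rw [uIcc_comm]
      exact h.opposite
    · rw [hfix.eq]
      exact left_mem_uIcc
  · rw [iterate_succ_apply']
    exact right_mem_uIcc

/-- The intervals between `z` and `c` and between `a` and `c` each cover both of them in `N` steps;
the point found here visits the first of them once and the second `j - 1` times. -/
theorem exists_isPeriodicPt_mem_uIcc_ite (h : IsFold f a N c z) (hfix : IsFixedPt f a)
    (hs : s.OrdConnected) (hf : ContinuousOn f s) (hmaps : MapsTo f s s) (ha : a ∈ s) (hcs : c ∈ s)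
    (hN : 0 < N) {j : ℕ} (hj : 0 < j) :
    ∃ x, IsPeriodicPt f (j * N) x ∧
      ∀ i, f^[i] x ∈ uIcc (if j * N ∣ i then z else a) (f^[i % N] c) := by
  have hcN (i : ℕ) : f^[i] c ∈ s := hmaps.iterate i hcs
  have hzs : z ∈ s := h.right_mem hs hmaps ha hcs
  let u : ℕ → α := fun i => if j * N ∣ i then z else a
  have hu_cases (i : ℕ) : u i = z ∧ i % N = 0 ∨ u i = a := by
    simp only [u]
    split_ifs with hdvd
    · exact Or.inl ⟨rfl, Nat.mod_eq_zero_of_dvd ((dvd_mul_left N j).trans hdvd)⟩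
    · exact Or.inr rfl
  have hcont (i : ℕ) : ContinuousOn f (uIcc (u i) (f^[i % N] c)) := by
    refine hf.mono (hs.uIcc_subset ?_ (hcN _))
    rcases hu_cases i with ⟨hui, -⟩ | hui <;> rwa [hui]
  have hstep (i : ℕ) : uIcc (u (i + 1)) (f^[(i + 1) % N] c) ⊆ uIcc a (f^[i % N + 1] c) := by
    rw [← Nat.mod_add_mod]
    have hle : i % N + 1 ≤ N := Nat.mod_lt i hN
    rcases hle.eq_or_lt with hlast | hlt
    · rw [hlast, Nat.mod_self]
      exact h.uIcc_subset_uIcc_iterate ((hu_cases (i + 1)).imp_left And.left)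
    · have hui : u (i + 1) = a := (hu_cases (i + 1)).resolve_left fun ⟨_, hmod⟩ => by
        rw [← Nat.mod_add_mod, Nat.mod_eq_of_lt hlt] at hmod
        exact Nat.succ_ne_zero _ hmod
      rw [hui, Nat.mod_eq_of_lt hlt]
  refine exists_isPeriodicPt_of_forall_subset_image (Nat.mul_pos hj hN) (fun i => ?_) (fun i => ?_)
    hcont fun i => (hstep i).trans (h.uIcc_iterate_subset_image hfix (hcont i) (hu_cases i))
  · simp only [Nat.dvd_add_self_right]
  · simp only [Nat.add_mul_mod_self_right]

theorem exists_isPeriodicPt (h : IsFold f a N c z) (hfix : IsFixedPt f a) (hs : s.OrdConnected)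
    (hf : ContinuousOn f s) (hmaps : MapsTo f s s) (ha : a ∈ s) (hcs : c ∈ s) (hN : 0 < N) {j : ℕ}
    (hj : 0 < j) :
    ∃ x ∈ uIcc z c, IsPeriodicPt f (j * N) x ∧ (∀ i, f^[i] x ≠ a) ∧
      (∀ i, f^[i] x < a ↔ f^[i % N] c < a) ∧
      ∀ m, 0 < m → m < j → f^[m * N] x ∈ uIcc a c := by
  have hM : 0 < j * N := Nat.mul_pos hj hN
  obtain ⟨x, hx, hmem⟩ := h.exists_isPeriodicPt_mem_uIcc_ite hfix hs hf hmaps ha hcs hN hj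
  have hxzc : x ∈ uIcc z c := by simpa using hmem 0
  have hxa (i : ℕ) : f^[i] x ≠ a := iterate_ne_of_isPeriodicPt hfix hM hx
    (fun hxa => h.center_notMem_uIcc (hxa ▸ hxzc)) i
  refine ⟨x, hxzc, hx, hxa, fun i => ?_, fun m hm hmj => ?_⟩
  · have hi := hmem i
    split_ifs at hi with hdvd
    · rw [Nat.mod_eq_zero_of_dvd ((dvd_mul_left N j).trans hdvd), iterate_zero_apply] at hi ⊢
      exact (lt_iff_lt_of_mem_uIcc (uIcc_subset_uIcc right_mem_uIcc h.between hi) (hxa i)).trans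
        h.right_lt_iff
    · exact lt_iff_lt_of_mem_uIcc hi (hxa i)
  · have hdvd : ¬ j * N ∣ m * N := fun hdvd =>
      (Nat.mul_lt_mul_of_pos_right hmj hN).not_ge (Nat.le_of_dvd (Nat.mul_pos hm hN) hdvd)
    simpa [hdvd] using hmem (m * N)

theorem exists_isFold_of_crossings_eq {k d b : ℕ} (hk : 0 < k) (hd : 0 < d) (hb : Even b)
    (hfix : IsFixedPt f a) (hs : s.OrdConnected) (hf : ContinuousOn f s) (hmaps : MapsTo f s s)
    (ha : a ∈ s) (hcs : c ∈ s) (h : IsFold f a (k * d) c z)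
    (hcr : crossings f a c (k * d) = k * b) :
    ∃ c' ∈ s, ∃ z', IsFold f a d c' z' ∧ crossings f a c' d = b := by
  induction k, hk using Nat.le_induction generalizing c z with
  | base => exact ⟨c, hcs, z, by simpa using h, by simpa using hcr⟩
  | succ k _ ih =>
    have hk' : 0 < k + 1 := k.succ_pos
    have hN : 0 < (k + 1) * d := Nat.mul_pos hk' hd
    obtain ⟨x, hxzc, hx, hxa, hside, -⟩ :=
      h.exists_isPeriodicPt hfix hs hf hmaps ha hcs hN one_pos
    rw [one_mul] at hx
    have hcx : crossings f a x ((k + 1) * d) = (k + 1) * b := by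
      rw [← hcr]
      simpa using h.crossings_iterate_eq hside 0
    have hxs : x ∈ s := hs.uIcc_subset (h.right_mem hs hmaps ha hcs) hcs hxzc
    rcases forall_crossings_eq_or_exists_crossings_ne hk' hd hx hcx with hall | ⟨i, hi, hi'⟩
    · have hall_c (i : ℕ) (hi : i + d ≤ (k + 1) * d) : crossings f a (f^[i] c) d = b := by
        rw [← hall i]
        refine crossings_congr fun l hl => ?_
        rw [← iterate_add_apply, ← iterate_add_apply, hside, h.iterate_mod_lt_iff (by omega)]
      obtain ⟨m, hfold⟩ := h.exists_isFold_of_forall_crossings_eq hfix hk' hd hb hall_c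
      exact ⟨_, hmaps.iterate (m * d) hcs, z, hfold⟩
    · rw [iterate_succ_apply', ← hi] at hi'
      have hxi : IsPeriodicPt f ((k + 1) * d) (f^[i] x) := hx.apply_iterate i
      have hxis : f^[i] x ∈ s := hmaps.iterate i hxs
      rcases isFold_or_isFold_of_crossings_ne hxi (fun j => by
        rw [← iterate_add_apply]; exact hxa _) (hi ▸ hb) hi' with hfold | hfold
      · exact ⟨_, hxis, _, hfold, hi⟩
      · refine ih (hmaps.iterate d hxis) hfold ?_
        have hsum := crossings_iterate_of_isPeriodicPt (a := a) hx i
        rw [hcx, Nat.succ_mul k d, add_comm (k * d), crossings_add, hi] at hsum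
        linarith

theorem exists_minimalPeriod_eq {d q j : ℕ} (hd : 0 < d) (hj : 0 < j) (hqd : q.Coprime d)
    (hfix : IsFixedPt f a) (hs : s.OrdConnected) (hf : ContinuousOn f s) (hmaps : MapsTo f s s)
    (ha : a ∈ s) (hcs : c ∈ s) (h : IsFold f a d c z) (hcr : crossings f a c d = 2 * q) :
    ∃ x ∈ s, minimalPeriod f x = j * d ∧ (∀ i, f^[i] x ≠ a) ∧
      crossings f a x (j * d) = j * (2 * q) := by
  obtain ⟨x, hxzc, hx, hxa, hside, hnear⟩ :=
    h.exists_isPeriodicPt hfix hs hf hmaps ha hcs hd hj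
  have hcx : crossings f a x (j * d) = j * (2 * q) := by
    simp only [crossings_mul_eq_sum, h.crossings_iterate_eq hside, hcr, Finset.sum_const,
      Finset.card_range, smul_eq_mul]
  have hxs : x ∈ s := hs.uIcc_subset (h.right_mem hs hmaps ha hcs) hcs hxzc
  refine ⟨x, hxs, ?_, hxa, hcx⟩
  obtain ⟨m, hm⟩ := dvd_minimalPeriod_of_crossings_eq hj hqd hx hcx
  rw [mul_comm] at hm
  have hm_pos : 0 < m := Nat.pos_of_mul_pos_right (hm ▸ hx.minimalPeriod_pos (Nat.mul_pos hj hd))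
  have hmj : m ≤ j := Nat.le_of_mul_le_mul_right (hm ▸ hx.minimalPeriod_le (Nat.mul_pos hj hd)) hd
  rcases hmj.eq_or_lt with rfl | hmj
  · exact hm
  have hxac : x ∈ uIcc a c := by
    simpa only [← hm, iterate_minimalPeriod] using hnear m hm_pos hmj
  obtain rfl : x = c := h.eq_left_of_mem_uIcc hxzc hxac
  have hdx : f^[d] x ∈ uIcc a x := by simpa only [one_mul] using hnear 1 one_pos (by omega)
  obtain rfl : z = x := h.eq_left_of_mem_uIcc left_mem_uIcc (uIcc_subset_uIcc_left hdx h.returns)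
  have hfz : a = f z := by simpa using h.opposite
  exact absurd hfz.symm (hxa 1)

end Topology

end IsFold

section OverRotation

variable {f : ℝ → ℝ} {s : Set ℝ} {a c z : ℝ}

theorem chi_eq_ite (hup : ∀ x ∈ s, x < a → x < f x) (hdown : ∀ x ∈ s, a < x → f x < x) {x : ℝ}
    (hx : x ∈ s) (hfx : f x ∈ s) (hxa : x ≠ a) (hfxa : f x ≠ a) :
    chi f x = if x < a ↔ f x < a then 0 else 1 / 2 := by
  have hsign {y : ℝ} (hy : y ∈ s) (hya : y ≠ a) : y < a ∧ 0 < f y - y ∨ a < y ∧ f y - y < 0 := by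
    rcases hya.lt_or_gt with h | h
    · exact Or.inl ⟨h, sub_pos.2 (hup y hy h)⟩
    · exact Or.inr ⟨h, sub_neg.2 (hdown y hy h)⟩
  rw [chi]
  rcases hsign hx hxa with ⟨h, hpos⟩ | ⟨h, hneg⟩ <;>
    rcases hsign hfx hfxa with ⟨h', hpos'⟩ | ⟨h', hneg'⟩
  · rw [if_neg (mul_pos hpos hpos').not_ge, if_pos (iff_of_true h h')]
  · rw [if_pos (mul_neg_of_pos_of_neg hpos hneg').le, if_neg fun hiff => h'.not_gt (hiff.1 h)]
  · rw [if_pos (mul_neg_of_neg_of_pos hneg hpos').le, if_neg fun hiff => h.not_gt (hiff.2 h')]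
  · rw [if_neg (mul_pos_of_neg_of_neg hneg hneg').not_ge,
      if_pos (iff_of_false h.not_gt h'.not_gt)]

theorem overRotNum_eq_crossings_div (hup : ∀ x ∈ s, x < a → x < f x)
    (hdown : ∀ x ∈ s, a < x → f x < x) (hmaps : MapsTo f s s) {y : ℝ} (hy : y ∈ s)
    (hne : ∀ i, f^[i] y ≠ a) :
    overRotNum f y = crossings f a y (minimalPeriod f y) / (2 * minimalPeriod f y) := by
  have hchi (i : ℕ) :
      chi f (f^[i] y) = if f^[i] y < a ↔ f^[i + 1] y < a then 0 else 1 / 2 := by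
    have hi := hmaps.iterate (i + 1) hy
    have hnei := hne (i + 1)
    rw [iterate_succ_apply'] at hi hnei ⊢
    exact chi_eq_ite hup hdown (hmaps.iterate i hy) hi (hne i) hnei
  have hsum : ∑ i ∈ Finset.range (minimalPeriod f y), chi f (f^[i] y) =
      crossings f a y (minimalPeriod f y) * (1 / 2) := by
    simp only [hchi, Finset.sum_ite, Finset.sum_const_zero, Finset.sum_const, zero_add,
      nsmul_eq_mul, crossings, Nat.count_eq_card_filter_range]
  rw [overRotNum, hsum, mul_one_div, div_div]

theorem IsFold.exists_overRotNum_eq {n r t : ℕ} (h : IsFold f a n c z) (hn : 0 < n) (ht : 0 < t)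
    (hfix : IsFixedPt f a) (hs : s.OrdConnected) (hf : ContinuousOn f s) (hmaps : MapsTo f s s)
    (hup : ∀ x ∈ s, x < a → x < f x) (hdown : ∀ x ∈ s, a < x → f x < x) (ha : a ∈ s) (hcs : c ∈ s)
    (hrt : (r : ℝ) / t = crossings f a c n / (2 * n)) :
    ∃ y ∈ s, y ∈ periodicPts f ∧ f y ≠ y ∧ minimalPeriod f y = t ∧
      overRotNum f y = (r : ℝ) / t := by
  obtain ⟨m, hm⟩ : Even (crossings f a c n) := (even_crossings_iff n).2 h.iterate_lt_iff.symm
  have hcross : r * n = m * t := by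
    rw [hm] at hrt
    field_simp at hrt
    push_cast at hrt
    exact_mod_cast (by linarith : (r : ℝ) * n = m * t)
  obtain ⟨q, d, k, j, hqd, rfl, rfl, rfl, rfl⟩ := exists_coprime_of_mul_eq_mul hn hcross
  have hd : 0 < d := Nat.pos_of_mul_pos_left hn
  obtain ⟨c', hcs', z', h', hcr'⟩ := h.exists_isFold_of_crossings_eq (b := 2 * q)
    (Nat.pos_of_mul_pos_right hn) hd (even_two_mul q) hfix hs hf hmaps ha hcs (by rw [hm]; ring)
  obtain ⟨y, hy, hmin, hya, hcr⟩ := h'.exists_minimalPeriod_eq hd (Nat.pos_of_mul_pos_right ht)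
    hqd hfix hs hf hmaps ha hcs' hcr'
  refine ⟨y, hy, minimalPeriod_pos_iff_mem_periodicPts.1 (hmin ▸ ht), fun hfy => ?_, hmin, ?_⟩
  · rcases (hya 0).lt_or_gt with hlt | hlt
    · exact (hup y hy hlt).ne' hfy
    · exact (hdown y hy hlt).ne hfy
  · rw [overRotNum_eq_crossings_div hup hdown hmaps hy hya, hmin, hcr]
    push_cast
    rw [mul_left_comm, mul_div_mul_left _ _ two_ne_zero]

end OverRotation

theorem stmt1_general (f : ℝ → ℝ) (S : Set ℝ) (a c : ℝ) (n : ℕ)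
    (hS : S.OrdConnected) (hf : ContinuousOn f S) (hmaps : MapsTo f S S) (hfix : f a = a)
    (hup : ∀ x ∈ S, x < a → x < f x) (hdown : ∀ x ∈ S, a < x → f x < x)
    (hc : c ∈ S) (hca : c < a) (hfc : a < f c) (hfn : f^[n] c ≤ c) (hfn1 : f^[n + 1] c ≤ a)
    (p : ℕ)
    (hp : p = ((Finset.range n).filter (fun i =>
        (f^[i] c < a ∧ a < f^[i + 1] c) ∨ (a < f^[i] c ∧ f^[i + 1] c < a))).card) :
    ∀ r s : ℕ, 0 < s → (r : ℝ) / s = (p : ℝ) / (2 * n) →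
      ∃ y ∈ S, y ∈ periodicPts f ∧ f y ≠ y ∧ minimalPeriod f y = s ∧
        overRotNum f y = (r : ℝ) / s := by
  intro r s hs hrs
  have hn : 0 < n := Nat.pos_of_ne_zero fun hn => by
    rw [hn, zero_add, iterate_one] at hfn1
    exact hfn1.not_gt hfc
  have ha : a ∈ S := hS.out hc (hmaps hc) ⟨hca.le, hfc.le⟩
  have hfold : IsFold f a n c (f^[n] c) :=
    { ne := hca.ne
      between := mem_uIcc.2 (Or.inr ⟨hfn, hca.le⟩)
      returns := right_mem_uIcc
      opposite := mem_uIcc.2 (Or.inr ⟨iterate_succ_apply' f n c ▸ hfn1, hfc.le⟩) }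
  have hcr : p = crossings f a c n :=
    hp.trans (card_filter_eq_crossings fun i hi => hfold.iterate_ne hfix hi)
  exact hfold.exists_overRotNum_eq hn hs hfix hS hf hmaps hup hdown ha hc (hcr ▸ hrs)

theorem stmt1 (f : ℝ → ℝ) (a c : ℝ) (n : ℕ)
    (hf : ContinuousOn f (Set.Icc 0 1))
    (hmaps : Set.MapsTo f (Set.Icc 0 1) (Set.Icc 0 1))
    (hpm : PiecewiseMonotoneOn f 0 1)
    (ha : a ∈ Set.Icc (0:ℝ) 1) (hfix : f a = a)
    (huniq : ∀ x ∈ Set.Icc (0:ℝ) 1, f x = x → x = a)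
    (hc : c ∈ Set.Icc (0:ℝ) 1) (hca : c < a) (hfc : a < f c)
    (hn : 1 ≤ n) (hfn : f^[n] c ≤ c) (hfn1 : f^[n+1] c ≤ a)
    (p : ℕ)
    (hp : p = ((Finset.range n).filter (fun i =>
        (f^[i] c < a ∧ a < f^[i+1] c) ∨ (a < f^[i] c ∧ f^[i+1] c < a))).card) :
    ∀ r s : ℕ, 0 < r → 0 < s → (r : ℝ) / s = (p : ℝ) / (2 * n) →
      ∃ y ∈ Set.Icc (0:ℝ) 1, y ∈ Function.periodicPts f ∧ f y ≠ y ∧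
        Function.minimalPeriod f y = s ∧ overRotNum f y = (r : ℝ) / s := by
  exact fun r s _ => stmt1_general f (Icc 0 1) a c n ordConnected_Icc hf hmaps hfix
    (fun x => lt_apply_of_lt_of_unique_fixedPt hf hmaps huniq)
    (fun x => apply_lt_of_lt_of_unique_fixedPt hf hmaps huniq) hc hca hfc hfn hfn1 p hp r s
end

section
/- Let I⊆J be compact real intervals, let g:I→I and f:J→J be continuous piecewise-monotone maps, let a be the unique fixed point of g in I and the unique fixed point of f in J, and suppose a is not a local extremum of g. For x∈I let ψ_g(x) denote the point of the closed interval with endpoints x and a that is closest to a and satisfies g(ψ_g(x))=g(x), and set B=ψ_g(I). If for every x∈B the closed interval with endpoints f(x) and a contains the closed interval with endpoints g(x) and a (f is more repellent from a than g on B), then I_f ⊇ I_g; in particular, if g has a periodic point of odd minimal period greater than 1, then the set of minimal periods of periodic points of f contains the set of minimal periods of periodic points of g. -/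
open Set Function

/-! The proof compares itineraries of periodic orbits with respect to the sides of `a`. Replacing
`y` by the closest point to `a` with the same image shows that `[a, g y] ⊆ f [a, y]` for all `y`, so
the `g`-orbit of a point `x` of period `n` pulls back to an `f`-orbit segment `w, f w, …, f^n w = x`
with `f^i w ∈ [a, g^i x]`; in particular `w ∈ [a, f^n w]`. If some `[a, f^k w]` contains a preimage
of `a` other than `a`, a loop of covering intervals yields a point of `f`-period `n` with the
itinerary of `w`. Otherwise `f - a` has constant sign along the part of the segment on either side
of `a`, and since a step that stays on one side moves towards `a`, the segment alternates between
the sides. Then `f^2` cannot always move towards `a` along it, so `f` has a point of period two,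
and both over-rotation numbers are `1/2`. The same shadowing principle shows that an orbit of odd
period `d` forces all even periods and all odd periods from `d` on. -/

lemma iterate_ne_of_le {α : Type*} {f : α → α} {a x : α} {m n : ℕ} (ha : f a = a)
    (hn : f^[n] x ≠ a) (hmn : m ≤ n) : f^[m] x ≠ a := by
  rintro h
  rw [← Nat.sub_add_cancel hmn, iterate_add_apply, h, iterate_fixed ha] at hn
  exact hn rfl

section Sides

variable {α : Type*} [LinearOrder α] {f : α → α} {a x y : α} {m n : ℕ}

/-- `x` and `y` lie strictly on the same side of `a`. The pattern of sides visited by an orbit is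
its itinerary. -/
def SameSide (a x y : α) : Prop :=
  (x < a ∧ y < a) ∨ (a < x ∧ a < y)

/-- `x` and `y` lie strictly on opposite sides of `a`. -/
def OppositeSides (a x y : α) : Prop :=
  (x < a ∧ a < y) ∨ (a < x ∧ y < a)

/-- Each of the first `n` steps of the `f`-orbit of `x` crosses from one side of `a` to the
other. -/
def Alternates (f : α → α) (a x : α) (n : ℕ) : Prop :=
  ∀ i < n, OppositeSides a (f^[i] x) (f^[i + 1] x)

namespace SameSide

lemma symm (h : SameSide a x y) : SameSide a y x := by
  grind [SameSide]

lemma trans {z : α} (hxy : SameSide a x y) (hyz : SameSide a y z) : SameSide a x z := by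
  grind [SameSide]

lemma left_ne (h : SameSide a x y) : x ≠ a := by
  grind [SameSide]

end SameSide

lemma sameSide_of_mem_uIcc (h : x ∈ uIcc a y) (hx : x ≠ a) : SameSide a x y := by
  grind [SameSide, mem_uIcc]

lemma sameSide_or_oppositeSides (hx : x ≠ a) (hy : y ≠ a) :
    SameSide a x y ∨ OppositeSides a x y := by
  grind [SameSide, OppositeSides]

lemma OppositeSides.not_sameSide (h : OppositeSides a x y) : ¬ SameSide a x y := by
  grind [SameSide, OppositeSides]

lemma oppositeSides_congr {x' y' : α} (hx : SameSide a x x') (hy : SameSide a y y') :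
    OppositeSides a x y ↔ OppositeSides a x' y' := by
  grind [SameSide, OppositeSides]

namespace Alternates

lemma cons (h : OppositeSides a x (f x)) (hf : Alternates f a (f x) n) :
    Alternates f a x (n + 1) := by
  rintro (_ | i) hi
  · exact h
  · exact hf i (by omega)

lemma add (hm : Alternates f a x m) (hn : Alternates f a (f^[m] x) n) :
    Alternates f a x (m + n) := by
  intro i hi
  rcases lt_or_ge i m with him | hmi
  · exact hm i him
  · obtain ⟨k, rfl⟩ := Nat.exists_eq_add_of_le' hmi
    simpa only [← iterate_add_apply, add_right_comm] using hn k (by omega)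

lemma sameSide_iterate_iff (h : Alternates f a x n) (hx : x ≠ a) :
    SameSide a x (f^[n] x) ↔ Even n := by
  induction n with
  | zero => grind [SameSide, iterate_zero_apply]
  | succ n ih =>
    have hstep := h n n.lt_succ_self
    rw [Nat.even_add_one, ← ih fun i hi => h i (hi.trans n.lt_succ_self)]
    grind [SameSide, OppositeSides]

lemma even_of_iterate_eq (h : Alternates f a x n) (hx : x ≠ a) (hn : f^[n] x = x) : Even n := by
  rw [← h.sameSide_iterate_iff hx, hn]
  grind [SameSide]

lemma congr {g : α → α} (h : Alternates f a x n)
    (hside : ∀ i ≤ n, SameSide a (g^[i] y) (f^[i] x)) : Alternates g a y n := fun i hi =>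
  (oppositeSides_congr (hside i hi.le) (hside (i + 1) hi)).2 (h i hi)

lemma exists_sameSide_of_not (ha : f a = a) (hn : f^[n] x ≠ a) (h : ¬ Alternates f a x n) :
    ∃ k < n, Alternates f a x k ∧ SameSide a (f^[k] x) (f^[k + 1] x) := by
  classical
  have hex : ∃ k, k < n ∧ ¬ OppositeSides a (f^[k] x) (f^[k + 1] x) := by
    simpa only [Alternates, not_forall, exists_prop] using h
  obtain ⟨hk, hopp⟩ := Nat.find_spec hex
  refine ⟨Nat.find hex, hk, fun i hi => ?_,
    (sameSide_or_oppositeSides (iterate_ne_of_le ha hn hk.le)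
      (iterate_ne_of_le ha hn hk)).resolve_right hopp⟩
  by_contra hi'
  exact Nat.find_min hex hi ⟨hi.trans hk, hi'⟩

end Alternates

end Sides

lemma minimalPeriod_eq_of_forall_iterate_ne {α : Type*} {f : α → α} {x : α} {n : ℕ} (hn : 0 < n)
    (hx : f^[n] x = x) (hne : ∀ e < n, 0 < e → f^[e] x ≠ x) : minimalPeriod f x = n := by
  have hper : IsPeriodicPt f n x := hx
  refine (hper.minimalPeriod_le hn).antisymm (not_lt.1 fun hlt => ?_)
  exact hne _ hlt (hper.minimalPeriod_pos hn) iterate_minimalPeriod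

lemma exists_iterate_eq_of_uIcc_subset_image {α : Type*} [Lattice α] {f g : α → α} {s : Set α}
    {a : α} (hg : MapsTo g s s) (hcov : ∀ x ∈ s, uIcc a (g x) ⊆ f '' uIcc a x) (n : ℕ) {x v : α}
    (hx : x ∈ s) (hv : v ∈ uIcc a (g^[n] x)) :
    ∃ w, f^[n] w = v ∧ ∀ i ≤ n, f^[i] w ∈ uIcc a (g^[i] x) := by
  induction n generalizing x with
  | zero => exact ⟨v, rfl, fun i hi => by rwa [Nat.le_zero.1 hi]⟩
  | succ n ih =>
    obtain ⟨w', hw', hmem⟩ := ih (hg hx) hv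
    obtain ⟨w, hw, rfl⟩ := hcov x hx (hmem 0 n.zero_le)
    refine ⟨w, hw', ?_⟩
    rintro (_ | i) hi
    · exact hw
    · exact hmem i (by omega)

section Coverings

variable {f : ℝ → ℝ} {s : Set ℝ}

lemma exists_closest {x a : ℝ} (hf : ContinuousOn f (uIcc x a)) :
    ∃ y ∈ uIcc x a, f y = f x ∧ ∀ z ∈ uIcc x a, f z = f x → |y - a| ≤ |z - a| := by
  have hc : IsCompact {z ∈ uIcc x a | f z = f x} :=
    isCompact_uIcc.of_isClosed_subset
      (hf.preimage_isClosed_of_isClosed isClosed_Icc isClosed_singleton) fun z hz => hz.1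
  obtain ⟨y, hy, hmin⟩ := hc.exists_isMinOn ⟨x, left_mem_uIcc, rfl⟩
    (f := fun z => |z - a|) (by fun_prop)
  exact ⟨y, hy.1, hy.2, fun z hz hfz => hmin (a := z) ⟨hz, hfz⟩⟩

lemma exists_uIcc_mapsTo {b c b' c' : ℝ} (hf : ContinuousOn f (uIcc b c))
    (hcov : uIcc b' c' ⊆ f '' uIcc b c) :
    ∃ u v, uIcc u v ⊆ uIcc b c ∧ f u = b' ∧ f v = c' ∧ MapsTo f (uIcc u v) (uIcc b' c') := by
  obtain ⟨s, hs, rfl⟩ := hcov left_mem_uIcc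
  obtain ⟨t, ht, rfl⟩ := hcov right_mem_uIcc
  have hts : uIcc t s ⊆ uIcc b c := uIcc_subset_uIcc ht hs
  obtain ⟨v, hv, hfv, hvmin⟩ := exists_closest (hf.mono hts)
  have hsv : uIcc s v ⊆ uIcc t s := uIcc_subset_uIcc right_mem_uIcc hv
  obtain ⟨u, hu, hfu, humin⟩ := exists_closest (hf.mono (hsv.trans hts))
  have huv : uIcc u v ⊆ uIcc s v := uIcc_subset_uIcc hu right_mem_uIcc
  have hcont : ContinuousOn f (uIcc u v) := hf.mono (huv.trans (hsv.trans hts))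
  refine ⟨u, v, huv.trans (hsv.trans hts), hfu, hfv, fun w hw => ?_⟩
  by_contra hfw
  have hpast : f t ∈ uIcc (f u) (f w) ∨ f s ∈ uIcc (f w) (f v) := by
    grind [mem_uIcc]
  rcases hpast with hpast | hpast
  · have huw : uIcc u w ⊆ uIcc u v := uIcc_subset_uIcc left_mem_uIcc hw
    obtain ⟨y, hy, hfy⟩ := intermediate_value_uIcc (hcont.mono huw) hpast
    have hle := hvmin y (hsv (huv (huw hy))) hfy
    have hwv : w = v := by
      rw [mem_uIcc] at hv hu hw hy
      grind
    exact hfw (by rw [hwv, hfv]; exact right_mem_uIcc)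
  · have hwv : uIcc w v ⊆ uIcc u v := uIcc_subset_uIcc hw right_mem_uIcc
    obtain ⟨y, hy, hfy⟩ := intermediate_value_uIcc (hcont.mono hwv) hpast
    have hle := humin y (huv (hwv hy)) hfy
    have hwu : w = u := by
      rw [mem_uIcc] at hu hw hy
      grind
    exact hfw (by rw [hwu, hfu]; exact left_mem_uIcc)

lemma exists_uIcc_iterate_mapsTo [s.OrdConnected] (hf : ContinuousOn f s) (n : ℕ) {b c : ℕ → ℝ}
    (hb : ∀ i ≤ n, b i ∈ s) (hc : ∀ i ≤ n, c i ∈ s)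
    (hcov : ∀ i < n, uIcc (b (i + 1)) (c (i + 1)) ⊆ f '' uIcc (b i) (c i)) :
    ∃ u v, f^[n] u = b n ∧ f^[n] v = c n ∧
      ∀ i ≤ n, MapsTo f^[i] (uIcc u v) (uIcc (b i) (c i)) := by
  induction n generalizing b c with
  | zero => exact ⟨b 0, c 0, rfl, rfl, fun i hi => by rw [Nat.le_zero.1 hi]; exact mapsTo_id _⟩
  | succ n ih =>
    obtain ⟨u', v', hu', hv', hmaps⟩ := ih (b := fun i => b (i + 1)) (c := fun i => c (i + 1))
      (fun i hi => hb _ (by omega)) (fun i hi => hc _ (by omega)) fun i hi => hcov _ (by omega)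
    have hsub : uIcc u' v' ⊆ uIcc (b 1) (c 1) := hmaps 0 n.zero_le
    obtain ⟨u, v, huv, rfl, rfl, hm⟩ := exists_uIcc_mapsTo
      (hf.mono (OrdConnected.uIcc_subset ‹_› (hb 0 (by omega)) (hc 0 (by omega))))
      (hsub.trans (hcov 0 n.succ_pos))
    refine ⟨u, v, hu', hv', ?_⟩
    rintro (_ | i) hi
    · exact huv
    · exact (hmaps i (by omega)).comp hm

lemma exists_iterate_eq_self_of_covers [s.OrdConnected] (hf : ContinuousOn f s)
    (hm : MapsTo f s s) {n : ℕ} {b c : ℕ → ℝ} (hb : ∀ i ≤ n, b i ∈ s) (hc : ∀ i ≤ n, c i ∈ s)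
    (hloop : uIcc (b 0) (c 0) ⊆ uIcc (b n) (c n))
    (hcov : ∀ i < n, uIcc (b (i + 1)) (c (i + 1)) ⊆ f '' uIcc (b i) (c i)) :
    ∃ z, f^[n] z = z ∧ ∀ i ≤ n, f^[i] z ∈ uIcc (b i) (c i) := by
  obtain ⟨u, v, hu, hv, hmaps⟩ := exists_uIcc_iterate_mapsTo hf n hb hc hcov
  have hsub : uIcc u v ⊆ uIcc (b 0) (c 0) := hmaps 0 n.zero_le
  have hs : uIcc u v ⊆ s :=
    hsub.trans (OrdConnected.uIcc_subset ‹_› (hb 0 n.zero_le) (hc 0 n.zero_le))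
  have hcont : ContinuousOn (fun w => f^[n] w - w) (uIcc u v) :=
    ((hf.iterate hm n).mono hs).sub continuousOn_id
  have hzero : (0 : ℝ) ∈ uIcc (f^[n] u - u) (f^[n] v - v) := by
    have hun := hloop (hsub left_mem_uIcc)
    have hvn := hloop (hsub right_mem_uIcc)
    rw [hu, hv]
    rw [mem_uIcc] at *
    grind
  obtain ⟨z, hz, hfz⟩ := intermediate_value_uIcc hcont hzero
  exact ⟨z, sub_eq_zero.1 hfz, fun i hi => hmaps i hi hz⟩

end Coverings

/-- `f` is a continuous self-map of the compact interval `[b, c]` whose only fixed point is `a`. -/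
structure HasUniqueFixedPoint (f : ℝ → ℝ) (b c a : ℝ) : Prop where
  cont : ContinuousOn f (Icc b c)
  maps : MapsTo f (Icc b c) (Icc b c)
  mem : a ∈ Icc b c
  fixed : f a = a
  uniq : ∀ x ∈ Icc b c, f x = x → x = a

namespace HasUniqueFixedPoint

variable {f : ℝ → ℝ} {b c a x w z : ℝ} {d k m n : ℕ}

lemma uIcc_subset (H : HasUniqueFixedPoint f b c a) (hx : x ∈ Icc b c) : uIcc a x ⊆ Icc b c :=
  ordConnected_Icc.uIcc_subset H.mem hx

lemma uIcc_subset_image (H : HasUniqueFixedPoint f b c a) (hx : x ∈ Icc b c) :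
    uIcc a (f x) ⊆ f '' uIcc a x := by
  simpa only [H.fixed] using intermediate_value_uIcc (H.cont.mono (H.uIcc_subset hx))

lemma lt_map (H : HasUniqueFixedPoint f b c a) (hx : x ∈ Icc b c) (hxa : x < a) : x < f x := by
  by_contra! hle
  have hbx : Icc b x ⊆ Icc b c := Icc_subset_Icc_right hx.2
  have hb : b ∈ Icc b c := hbx (left_mem_Icc.2 hx.1)
  obtain ⟨z, hz, hfz⟩ := intermediate_value_Icc' hx.1 ((H.cont.mono hbx).sub continuousOn_id)
    ⟨sub_nonpos.2 hle, sub_nonneg.2 (H.maps hb).1⟩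
  exact (hz.2.trans_lt hxa).ne (H.uniq z (hbx hz) (sub_eq_zero.1 hfz))

lemma map_lt (H : HasUniqueFixedPoint f b c a) (hx : x ∈ Icc b c) (hxa : a < x) : f x < x := by
  by_contra! hle
  have hxc : Icc x c ⊆ Icc b c := Icc_subset_Icc_left hx.1
  have hc : c ∈ Icc b c := hxc (right_mem_Icc.2 hx.2)
  obtain ⟨z, hz, hfz⟩ := intermediate_value_Icc' hx.2 ((H.cont.mono hxc).sub continuousOn_id)
    ⟨sub_nonpos.2 (H.maps hc).2, sub_nonneg.2 hle⟩
  exact (hxa.trans_le hz.1).ne' (H.uniq z (hxc hz) (sub_eq_zero.1 hfz))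

lemma abs_map_sub_lt (H : HasUniqueFixedPoint f b c a) (hx : x ∈ Icc b c)
    (hside : SameSide a x (f x)) : |f x - a| < |x - a| := by
  have hlt := H.lt_map hx
  have hgt := H.map_lt hx
  grind [SameSide]

lemma abs_iterate_sub_lt (H : HasUniqueFixedPoint f b c a) (hx : x ∈ Icc b c) (hn : 0 < n)
    (hside : ∀ i < n, SameSide a (f^[i] x) (f^[i + 1] x)) : |f^[n] x - a| < |x - a| := by
  induction n, hn using Nat.le_induction with
  | base => exact H.abs_map_sub_lt hx (hside 0 one_pos)
  | succ n _ ih =>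
    have hlast := hside n n.lt_succ_self
    rw [iterate_succ_apply'] at hlast ⊢
    exact (H.abs_map_sub_lt (H.maps.iterate n hx) hlast).trans
      (ih fun i hi => hside i (hi.trans n.lt_succ_self))

lemma not_forall_sameSide (H : HasUniqueFixedPoint f b c a) (hw : w ∈ Icc b c) (hn : 0 < n)
    (hret : w ∈ uIcc a (f^[n] w)) : ¬ ∀ i < n, SameSide a (f^[i] w) (f^[i + 1] w) := fun hside => by
  have hlt := H.abs_iterate_sub_lt hw hn hside
  rw [mem_uIcc] at hret
  grind

lemma iterate_ne (H : HasUniqueFixedPoint f b c a) (hwa : w ≠ a) (hret : w ∈ uIcc a (f^[n] w))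
    (hkn : k ≤ n) : f^[k] w ≠ a := by
  refine iterate_ne_of_le H.fixed (fun h => hwa ?_) hkn
  simpa only [h, uIcc_self, mem_singleton_iff] using hret

/-- The intervals with endpoints `f^i v` and `f^i w` form a loop of coverings, where `v` is a point
between `a` and `w` that reaches `a'` after `k` steps. -/
lemma exists_same_itinerary_of_map_eq (H : HasUniqueFixedPoint f b c a) (hw : w ∈ Icc b c)
    (hwa : w ≠ a) (hret : w ∈ uIcc a (f^[n] w)) (hk : k < n) {a' : ℝ}
    (ha' : a' ∈ uIcc a (f^[k] w)) (hne : a' ≠ a) (hfa' : f a' = a) :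
    ∃ z ∈ Icc b c, f^[n] z = z ∧ ∀ i ≤ n, SameSide a (f^[i] z) (f^[i] w) := by
  obtain ⟨v, rfl, hv⟩ := exists_iterate_eq_of_uIcc_subset_image H.maps
    (fun x hx => H.uIcc_subset_image hx) k hw ha'
  have hva : v ≠ a := iterate_ne_of_le H.fixed hne k.zero_le
  have hlate : ∀ i, k < i → f^[i] v = a := fun i hi => by
    rw [← Nat.sub_add_cancel hi, iterate_add_apply, iterate_succ_apply', hfa',
      iterate_fixed H.fixed]
  have hmem : ∀ i, f^[i] v ∈ uIcc a (f^[i] w) := fun i => by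
    rcases le_or_gt i k with hi | hi
    · exact hv i hi
    · rw [hlate i hi]
      exact left_mem_uIcc
  have hwi : ∀ i, f^[i] w ∈ Icc b c := fun i => H.maps.iterate i hw
  have hvi : ∀ i, f^[i] v ∈ Icc b c := fun i => H.uIcc_subset (hwi i) (hmem i)
  have hloop : uIcc v w ⊆ uIcc (f^[n] v) (f^[n] w) := by
    rw [hlate n hk]
    exact (uIcc_subset_uIcc_right (hmem 0)).trans (uIcc_subset_uIcc_left hret)
  obtain ⟨z, hz, hzi⟩ := exists_iterate_eq_self_of_covers H.cont H.maps (fun i _ => hvi i)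
    (fun i _ => hwi i) hloop fun i _ => by
      simpa only [iterate_succ_apply'] using
        intermediate_value_uIcc (H.cont.mono (ordConnected_Icc.uIcc_subset (hvi i) (hwi i)))
  have hza : z ≠ a := by
    have hz0 := hzi 0 n.zero_le
    have hv0 := hmem 0
    simp only [iterate_zero_apply, mem_uIcc] at hz0 hv0
    grind
  refine ⟨z, ordConnected_Icc.uIcc_subset (hvi 0) hw (hzi 0 n.zero_le), hz, fun i hi => ?_⟩
  exact sameSide_of_mem_uIcc (uIcc_subset_uIcc_right (hmem i) (hzi i hi))
    (iterate_ne_of_le H.fixed (by rwa [hz]) hi)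

lemma sameSide_map_of_forall_ne (H : HasUniqueFixedPoint f b c a) {y : ℝ} (hy : y ∈ Icc b c)
    (hx : x ∈ uIcc a y) (hxa : x ≠ a) (hne : ∀ t ∈ uIcc a y, t ≠ a → f t ≠ a) :
    SameSide a (f x) (f y) := by
  have hxy : uIcc x y ⊆ uIcc a y := uIcc_subset_uIcc_right hx
  by_contra hside
  have hmem : a ∈ uIcc (f x) (f y) := by
    rw [mem_uIcc]
    grind [SameSide]
  obtain ⟨t, ht, hft⟩ :=
    intermediate_value_uIcc (H.cont.mono (hxy.trans (H.uIcc_subset hy))) hmem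
  refine hne t (hxy ht) ?_ hft
  rw [mem_uIcc] at hx ht
  grind

/-- If no point reaches `a` on the way from `a` to the orbit, then `f - a` has constant sign along
the part of the orbit lying on either side of `a`; since the orbit returns, it has to leave
both sides. -/
lemma alternates_of_forall_map_ne (H : HasUniqueFixedPoint f b c a) (hw : w ∈ Icc b c)
    (hwa : w ≠ a) (hn : 0 < n) (hret : w ∈ uIcc a (f^[n] w))
    (hne : ∀ k < n, ∀ t ∈ uIcc a (f^[k] w), t ≠ a → f t ≠ a) : Alternates f a w n := by
  have hwi : ∀ i, f^[i] w ∈ Icc b c := fun i => H.maps.iterate i hw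
  have hwia : ∀ i ≤ n, f^[i] w ≠ a := fun i hi => H.iterate_ne hwa hret hi
  have hsign : ∀ i < n, ∀ j < n, SameSide a (f^[i] w) (f^[j] w) →
      SameSide a (f^[i + 1] w) (f^[j + 1] w) := fun i hi j hj hij => by
    simp only [iterate_succ_apply']
    have hnested : f^[i] w ∈ uIcc a (f^[j] w) ∨ f^[j] w ∈ uIcc a (f^[i] w) := by
      simp only [mem_uIcc]
      grind [SameSide]
    rcases hnested with h | h
    · exact H.sameSide_map_of_forall_ne (hwi j) h (hwia i hi.le) (hne j hj)
    · exact (H.sameSide_map_of_forall_ne (hwi i) h (hwia j hj.le) (hne i hi)).symm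
  intro k hk
  refine (sameSide_or_oppositeSides (hwia k hk.le) (hwia (k + 1) hk)).resolve_left fun hstay => ?_
  have hafter : ∀ i, k ≤ i → i ≤ n → SameSide a (f^[i] w) (f^[k] w) := fun i hki => by
    induction i, hki using Nat.le_induction with
    | base => exact fun hi => sameSide_of_mem_uIcc right_mem_uIcc (hwia k hi)
    | succ i _ ih => exact fun hi => (hsign i hi k hk (ih (by omega))).trans hstay.symm
  have hall : ∀ i ≤ n, SameSide a (f^[i] w) (f^[k] w) := fun i => by
    induction i with
    | zero => exact fun _ => (sameSide_of_mem_uIcc hret hwa).trans (hafter n hk.le le_rfl)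
    | succ i ih => exact fun hi => (hsign i hi k hk (ih (by omega))).trans hstay.symm
  exact H.not_forall_sameSide hw hn hret fun i hi => (hall i hi.le).trans (hall (i + 1) hi).symm

lemma exists_same_itinerary_or_alternates (H : HasUniqueFixedPoint f b c a) (hw : w ∈ Icc b c)
    (hwa : w ≠ a) (hn : 0 < n) (hret : w ∈ uIcc a (f^[n] w)) :
    (∃ z ∈ Icc b c, f^[n] z = z ∧ ∀ i ≤ n, SameSide a (f^[i] z) (f^[i] w)) ∨
      Alternates f a w n := by
  by_cases hne : ∀ k < n, ∀ t ∈ uIcc a (f^[k] w), t ≠ a → f t ≠ a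
  · exact Or.inr (H.alternates_of_forall_map_ne hw hwa hn hret hne)
  · push Not at hne
    obtain ⟨k, hk, a', ha', hne, hfa'⟩ := hne
    exact Or.inl (H.exists_same_itinerary_of_map_eq hw hwa hret hk ha' hne hfa')

lemma exists_iterate_two_eq (H : HasUniqueFixedPoint f b c a) (hw : w ∈ Icc b c) (hwa : w ≠ a)
    (hn : 0 < n) (hret : w ∈ uIcc a (f^[n] w)) (halt : Alternates f a w n) :
    ∃ z ∈ Icc b c, z ≠ a ∧ f^[2] z = z := by
  by_contra! hno
  have H₂ : HasUniqueFixedPoint f^[2] b c a :=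
    { cont := H.cont.iterate H.maps 2
      maps := H.maps.iterate 2
      mem := H.mem
      fixed := iterate_fixed H.fixed 2
      uniq := fun x hx hfx => by_contra fun hxa => hno x hx hxa hfx }
  obtain ⟨m, rfl⟩ :=
    even_iff_exists_two_mul.1 ((halt.sameSide_iterate_iff hwa).1 (sameSide_of_mem_uIcc hret hwa))
  rw [iterate_mul] at hret
  refine H₂.not_forall_sameSide hw (by omega) hret fun i hi => ?_
  simp only [← iterate_mul, mul_add, mul_one]
  have hout := halt (2 * i) (by omega)
  have hback := halt (2 * i + 1) (by omega)
  grind [SameSide, OppositeSides]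

/-! ### Periods forced by an odd period -/

lemma exists_gap (H : HasUniqueFixedPoint f b c a) {O : Set ℝ} (hfin : O.Finite)
    (hO : O.Nonempty) (hsub : O ⊆ Icc b c) (ha : a ∉ O) (hmaps : MapsTo f O O) :
    ∃ p ∈ O, ∃ q ∈ O, p < a ∧ a < q ∧ ∀ y ∈ O, y ≤ p ∨ q ≤ y := by
  obtain ⟨M, hM, hmax⟩ := hfin.isCompact.exists_isGreatest hO
  obtain ⟨μ, hμ, hmin⟩ := hfin.isCompact.exists_isLeast hO
  have haM : a < M := (lt_or_gt_of_ne (ne_of_mem_of_not_mem hM ha)).resolve_left fun h =>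
    (hmax (hmaps hM)).not_gt (H.lt_map (hsub hM) h)
  have hμa : μ < a := (lt_or_gt_of_ne (ne_of_mem_of_not_mem hμ ha)).resolve_right fun h =>
    (hmin (hmaps hμ)).not_gt (H.map_lt (hsub hμ) h)
  obtain ⟨p, ⟨hp, hpa⟩, hpmax⟩ :=
    (hfin.inter_of_left (Iio a)).isCompact.exists_isGreatest ⟨μ, hμ, hμa⟩
  obtain ⟨q, ⟨hq, hqa⟩, hqmin⟩ :=
    (hfin.inter_of_left (Ioi a)).isCompact.exists_isLeast ⟨M, hM, haM⟩
  exact ⟨p, hp, q, hq, hpa, hqa, fun y hy =>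
    (lt_or_gt_of_ne (ne_of_mem_of_not_mem hy ha)).imp (fun h => hpmax ⟨hy, h⟩)
      fun h => hqmin ⟨hy, h⟩⟩

lemma exists_alternates_iterate_eq (H : HasUniqueFixedPoint f b c a) {p q v : ℝ}
    (hp : p ∈ Icc b c) (hq : q ∈ Icc b c) (hpa : p < a) (haq : a < q) (hfp : q ≤ f p)
    (hfq : f q ≤ p) (hv : v ∈ Icc p q) (hva : v ≠ a) (n : ℕ) :
    ∃ w ∈ Icc p q, f^[n] w = v ∧ Alternates f a w n := by
  induction n with
  | zero => exact ⟨v, hv, rfl, fun i hi => absurd hi i.not_lt_zero⟩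
  | succ n ih =>
    obtain ⟨w, hw, rfl, halt⟩ := ih
    have hwa : w ≠ a := iterate_ne_of_le H.fixed hva n.zero_le
    suffices ∃ w' ∈ Icc p q, f w' = w ∧ OppositeSides a w' w by
      obtain ⟨w', hw', rfl, hopp⟩ := this
      exact ⟨w', hw', rfl, halt.cons hopp⟩
    rcases lt_or_gt_of_ne hwa with hlt | hgt
    · obtain ⟨w', hw', rfl⟩ := H.uIcc_subset_image hq
        (mem_uIcc_of_ge (hfq.trans hw.1) hlt.le)
      rw [uIcc_of_le haq.le] at hw'
      have hne : w' ≠ a := by rintro rfl; exact hwa H.fixed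
      exact ⟨w', ⟨hpa.le.trans hw'.1, hw'.2⟩, rfl, Or.inr ⟨hw'.1.lt_of_ne' hne, hlt⟩⟩
    · obtain ⟨w', hw', rfl⟩ := H.uIcc_subset_image hp
        (mem_uIcc_of_le hgt.le (hw.2.trans hfp))
      rw [uIcc_of_ge hpa.le] at hw'
      have hne : w' ≠ a := by rintro rfl; exact hwa H.fixed
      exact ⟨w', ⟨hw'.1, hw'.2.trans haq.le⟩, rfl, Or.inl ⟨hw'.2.lt_of_ne hne, hgt⟩⟩

lemma exists_gap_of_iterate_eq (H : HasUniqueFixedPoint f b c a) (hz : z ∈ Icc b c) (hd : 0 < d)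
    (hzd : f^[d] z = z) (hza : z ≠ a) :
    ∃ p ∈ Icc b c, ∃ q ∈ Icc b c, p < a ∧ a < q ∧ q ≤ f p ∧ f q ≤ p ∧ f^[d] p = p ∧
      ∀ i, f^[i] p ≤ p ∨ q ≤ f^[i] p := by
  have hper : IsPeriodicPt f d z := hzd
  set O : Set ℝ := range fun i => f^[i] z
  have hfin : O.Finite := ((finite_Iio d).image fun i => f^[i] z).subset <| by
    rintro _ ⟨i, rfl⟩
    exact ⟨i % d, Nat.mod_lt i hd, hper.iterate_mod_apply i⟩
  have hsub : O ⊆ Icc b c := by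
    rintro _ ⟨i, rfl⟩
    exact H.maps.iterate i hz
  have haO : a ∉ O := by
    rintro ⟨i, hi⟩
    exact iterate_ne_of_le H.fixed (by rwa [hper.mul_const i]) (Nat.le_mul_of_pos_left i hd) hi
  have hmaps : MapsTo f O O := by
    rintro _ ⟨i, rfl⟩
    exact ⟨i + 1, iterate_succ_apply' f i z⟩
  obtain ⟨p, hp, q, hq, hpa, haq, hgap⟩ := H.exists_gap hfin ⟨z, 0, rfl⟩ hsub haO hmaps
  refine ⟨p, hsub hp, q, hsub hq, hpa, haq,
    (hgap _ (hmaps hp)).resolve_left (H.lt_map (hsub hp) hpa).not_ge,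
    (hgap _ (hmaps hq)).resolve_right (H.map_lt (hsub hq) haq).not_ge, ?_,
    fun i => hgap _ (hmaps.iterate i hp)⟩
  obtain ⟨i, rfl⟩ := hp
  exact hper.apply_iterate i

/-- Follow the orbit of a point `p` next to the gap around `a` up to its first step that
stays on one side; before that, oscillate in the gap for as long as the length `n` requires. -/
lemma exists_alternates_return (H : HasUniqueFixedPoint f b c a) (hz : z ∈ Icc b c)
    (hd : Odd d) (hzd : f^[d] z = z) (hza : z ≠ a) (hn : Odd n) (hdn : d ≤ n) :
    ∃ w ∈ Icc b c, w ≠ a ∧ w ∈ uIcc a (f^[n] w) ∧ Alternates f a w (n - 1) ∧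
      SameSide a (f^[n - 1] w) (f^[n] w) := by
  obtain ⟨p, hp, q, hq, hpa, haq, hfp, hfq, hpd, hgap⟩ :=
    H.exists_gap_of_iterate_eq hz hd.pos hzd hza
  obtain ⟨j, hj, hjalt, hjside⟩ := Alternates.exists_sameSide_of_not H.fixed
    (by rw [hpd]; exact hpa.ne) fun h => Nat.not_even_iff_odd.2 hd (h.even_of_iterate_eq hpa.ne hpd)
  obtain ⟨w, hw, hwp, hwalt⟩ := H.exists_alternates_iterate_eq hp hq hpa haq hfp hfq
    ⟨le_rfl, (hpa.trans haq).le⟩ hpa.ne (n - 1 - j)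
  have hn₁ : n - 1 = n - 1 - j + j := by omega
  have hn₀ : n = n - 1 + 1 := by omega
  have hwj : f^[n - 1] w = f^[j] p := by rw [hn₁, add_comm, iterate_add_apply, hwp]
  have hwn : f^[n] w = f^[j + 1] p := by rw [hn₀, iterate_succ_apply', hwj, iterate_succ_apply']
  have halt : Alternates f a w (n - 1) := by
    rw [hn₁]
    exact hwalt.add (by rwa [hwp])
  have hwa : w ≠ a := iterate_ne_of_le H.fixed (by rw [hwp]; exact hpa.ne) (Nat.zero_le _)
  have hlast : SameSide a (f^[n - 1] w) (f^[n] w) := by rwa [hwj, hwn]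
  have hside : SameSide a w (f^[n] w) :=
    ((halt.sameSide_iterate_iff hwa).2 (by grind)).trans hlast
  refine ⟨w, ordConnected_Icc.out hp hq hw, hwa, ?_, halt, hlast⟩
  have hout := hgap (j + 1)
  rw [← hwn] at hout
  rw [mem_Icc] at hw
  rw [mem_uIcc]
  grind [SameSide]

lemma exists_alternates_of_odd (H : HasUniqueFixedPoint f b c a) (hz : z ∈ Icc b c)
    (hd : Odd d) (hzd : f^[d] z = z) (hza : z ≠ a) (hn : Odd n) (hdn : d ≤ n) :
    ∃ x ∈ Icc b c, f^[n] x = x ∧ Alternates f a x (n - 1) ∧ SameSide a (f^[n - 1] x) x := by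
  obtain ⟨w, hw, hwa, hret, halt, hlast⟩ := H.exists_alternates_return hz hd hzd hza hn hdn
  have hn₀ : n - 1 + 1 = n := by have := hn.pos; omega
  have hnot : ¬ Alternates f a w n := fun h => by
    have hopp := h (n - 1) (by omega)
    rw [hn₀] at hopp
    exact hopp.not_sameSide hlast
  obtain ⟨x, hx, hxn, hside⟩ :=
    (H.exists_same_itinerary_or_alternates hw hwa hn.pos hret).resolve_right hnot
  have hback : SameSide a x (f^[n] w) := by simpa only [hxn] using hside n le_rfl
  exact ⟨x, hx, hxn, halt.congr fun i hi => hside i (by omega),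
    ((hside (n - 1) (by omega)).trans hlast).trans hback.symm⟩

lemma exists_minimalPeriod_eq_of_odd (H : HasUniqueFixedPoint f b c a) (hz : z ∈ Icc b c)
    (hd : Odd d) (hzd : f^[d] z = z) (hza : z ≠ a) (hn : Odd n) (hdn : d ≤ n) :
    ∃ x ∈ Icc b c, x ∈ periodicPts f ∧ minimalPeriod f x = n := by
  obtain ⟨x, hx, hxn, halt, hlast⟩ := H.exists_alternates_of_odd hz hd hzd hza hn hdn
  refine ⟨x, hx, mk_mem_periodicPts hn.pos hxn,
    minimalPeriod_eq_of_forall_iterate_ne hn.pos hxn fun e hen he hxe => ?_⟩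
  have hpre : f^[n - 1] x = f^[e - 1] x := by
    calc f^[n - 1] x = f^[n - 1] (f^[e] x) := by rw [hxe]
      _ = f^[e - 1] (f^[n] x) := by
        rw [← iterate_add_apply, ← iterate_add_apply]
        congr 1
        omega
      _ = f^[e - 1] x := by rw [hxn]
  have hopp := halt (e - 1) (by omega)
  rw [Nat.sub_add_cancel he, hxe, ← hpre] at hopp
  exact hopp.not_sameSide hlast

/-- The loop of coverings is `[x', x] → [y, a] → [x', a] → [y, a] → ⋯ → [y, a] → [x, a]`. -/
lemma exists_horseshoe_orbit (H : HasUniqueFixedPoint f b c a) {x' y : ℝ} (hx : x ∈ Icc b c)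
    (hy : y ∈ Icc b c) (hx' : x' ∈ uIcc x a) (hout : uIcc y a ⊆ f '' uIcc x' x)
    (hin : uIcc y a ⊆ f '' uIcc x' a) (hback : uIcc x a ⊆ f '' uIcc y a) (hm : 0 < m) :
    ∃ z ∈ uIcc x' x, f^[2 * m] z = z ∧ ∀ i < 2 * m, (Odd i → f^[i] z ∈ uIcc y a) ∧
      (Even i → 0 < i → f^[i] z ∈ uIcc x' a) := by
  have hx'I : x' ∈ Icc b c := ordConnected_Icc.uIcc_subset hx H.mem hx'
  let s : ℕ → ℝ := fun i => if Odd i then y else if i = 2 * m then x else x'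
  let t : ℕ → ℝ := fun i => if i = 0 then x else a
  have hs₀ : s 0 = x' := by grind
  have hsn : s (2 * m) = x := by grind
  have hsodd : ∀ i, Odd i → s i = y := fun i hi => if_pos hi
  have hseven : ∀ i < 2 * m, Even i → s i = x' := by grind
  have ht : ∀ i, 0 < i → t i = a := fun i hi => if_neg hi.ne'
  have hsI : ∀ i ≤ 2 * m, s i ∈ Icc b c := by grind
  have htI : ∀ i ≤ 2 * m, t i ∈ Icc b c := by grind [H.mem]
  have hloop : uIcc (s 0) (t 0) ⊆ uIcc (s (2 * m)) (t (2 * m)) := by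
    rw [hs₀, hsn, ht (2 * m) (by omega)]
    exact uIcc_subset_uIcc hx' left_mem_uIcc
  have hcov : ∀ i < 2 * m, uIcc (s (i + 1)) (t (i + 1)) ⊆ f '' uIcc (s i) (t i) := fun i hi => by
    rw [ht _ i.succ_pos]
    rcases Nat.even_or_odd i with heven | hodd
    · rw [hsodd _ heven.add_one, hseven i hi heven]
      rcases eq_or_ne i 0 with rfl | hi₀
      · exact hout
      · rwa [ht i (Nat.pos_of_ne_zero hi₀)]
    · rw [hsodd i hodd, ht i hodd.pos]
      have hnext : s (i + 1) ∈ uIcc x a := by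
        have hxx : x ∈ uIcc x a := left_mem_uIcc
        grind
      exact (uIcc_subset_uIcc_right hnext).trans hback
  obtain ⟨z, hz, hzi⟩ := exists_iterate_eq_self_of_covers H.cont H.maps hsI htI hloop hcov
  have hz₀ : z ∈ uIcc (s 0) x := hzi 0 (Nat.zero_le _)
  refine ⟨z, hs₀ ▸ hz₀, hz, fun i hi => ⟨fun hodd => ?_,
    fun heven hi₀ => ?_⟩⟩
  · simpa only [hsodd i hodd, ht i hodd.pos] using hzi i hi.le
  · simpa only [hseven i hi heven, ht i hi₀] using hzi i hi.le

lemma exists_minimalPeriod_eq_two_mul_of_mem_uIcc (H : HasUniqueFixedPoint f b c a) {x' : ℝ}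
    (hx : x ∈ Icc b c) (hx' : x' ∈ uIcc x a) (hne : x' ≠ x) (hopp : OppositeSides a x (f x'))
    (hfar : x ∈ uIcc (f^[2] x') a) (hfx : SameSide a x (f x)) (hm : 0 < m) :
    ∃ z ∈ Icc b c, z ∈ periodicPts f ∧ minimalPeriod f z = 2 * m := by
  have hIcc {p q : ℝ} (hp : p ∈ Icc b c) (hq : q ∈ Icc b c) : uIcc p q ⊆ Icc b c :=
    ordConnected_Icc.uIcc_subset hp hq
  have hx'I : x' ∈ Icc b c := hIcc hx H.mem hx'
  have hcov {p q r s : ℝ} (hp : p ∈ Icc b c) (hq : q ∈ Icc b c) (hr : r ∈ uIcc (f p) (f q))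
      (hs : s ∈ uIcc (f p) (f q)) : uIcc r s ⊆ f '' uIcc p q :=
    (uIcc_subset_uIcc hr hs).trans (intermediate_value_uIcc (H.cont.mono (hIcc hp hq)))
  have hx'a : x' ≠ a := by
    rintro rfl
    grind [OppositeSides, H.fixed]
  have hacross : a ∈ uIcc (f x') (f x) := by
    rw [mem_uIcc]
    grind [SameSide, OppositeSides]
  obtain ⟨z, hz, hzm, hzi⟩ := H.exists_horseshoe_orbit hx (H.maps hx'I) hx'
    (hcov hx'I hx left_mem_uIcc hacross)
    (hcov hx'I H.mem left_mem_uIcc (H.fixed.symm ▸ right_mem_uIcc))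
    (hcov (H.maps hx'I) H.mem (by rwa [H.fixed]) (H.fixed.symm ▸ right_mem_uIcc)) hm
  refine ⟨z, hIcc hx'I hx hz, mk_mem_periodicPts (by omega) hzm,
    minimalPeriod_eq_of_forall_iterate_ne (by omega) hzm fun e he he₀ hze => ?_⟩
  rcases Nat.even_or_odd e with heven | hodd
  · have hzx' : z = x' := by
      have h := (hzi e he).2 heven he₀
      rw [hze, mem_uIcc] at h
      rw [mem_uIcc] at hx' hz
      grind
    have h := (hzi 2 (by grind)).2 even_two two_pos
    rw [hzx', mem_uIcc] at h
    rw [mem_uIcc] at hx' hfar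
    grind
  · have h := (hzi e he).1 hodd
    rw [hze, mem_uIcc] at h
    rw [mem_uIcc] at hx' hz
    grind [OppositeSides]

/-- The even iterates of an orbit of odd period `d` alternating for `d - 1` steps stay on one side
of `a` and eventually reach its last point; at that moment they jump outwards past it. -/
lemma exists_minimalPeriod_eq_two_mul (H : HasUniqueFixedPoint f b c a) (hz : z ∈ Icc b c)
    (hd : Odd d) (hzd : f^[d] z = z) (hza : z ≠ a) (hm : 0 < m) :
    ∃ x ∈ Icc b c, x ∈ periodicPts f ∧ minimalPeriod f x = 2 * m := by
  obtain ⟨y, hy, hyd, halt, hlast⟩ := H.exists_alternates_of_odd hz hd hzd hza hd le_rfl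
  obtain ⟨N, rfl⟩ := hd
  rw [Nat.add_sub_cancel] at halt hlast
  set x := f^[2 * N] y
  have hfx : f x = y := (iterate_succ_apply' f (2 * N) y).symm.trans hyd
  have hx : x ∈ Icc b c := H.maps.iterate _ hy
  have hya : y ≠ a := by grind [SameSide]
  have hside : ∀ i ≤ N, SameSide a y (f^[2 * i] y) := fun i hi =>
    (Alternates.sameSide_iterate_iff (fun j hj => halt j (by omega)) hya).2 (even_two_mul i)
  have hstart : |y - a| < |x - a| :=
    hfx ▸ H.abs_map_sub_lt hx (hfx.symm ▸ hlast)
  obtain ⟨l, hl, hnear, hfar⟩ :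
      ∃ l < N, |f^[2 * l] y - a| < |x - a| ∧ |x - a| ≤ |f^[2 * (l + 1)] y - a| := by
    by_contra! hno
    have hall : ∀ i ≤ N, |f^[2 * i] y - a| < |x - a| := fun i => by
      induction i with
      | zero => exact fun _ => hstart
      | succ i ih => exact fun hi => hno i hi (ih (by omega))
    exact (hall N le_rfl).false
  have hl₀ := hside l hl.le
  have hl₁ := hside (l + 1) hl
  have hopp := halt (2 * l) (by omega)
  rw [iterate_succ_apply'] at hopp
  rw [show 2 * (l + 1) = 2 + 2 * l by omega, iterate_add_apply] at hfar hl₁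
  refine H.exists_minimalPeriod_eq_two_mul_of_mem_uIcc (x' := f^[2 * l] y) hx ?_
    (by rintro h; rw [h] at hnear; exact hnear.false) ?_ ?_ (hfx.symm ▸ hlast) hm
  · rw [mem_uIcc]
    grind [SameSide]
  · grind [SameSide, OppositeSides]
  · rw [mem_uIcc]
    grind [SameSide]

end HasUniqueFixedPoint

/-! ### Over-rotation numbers and forcing -/

lemma overRotNum_eq_of_iterate_eq {f : ℝ → ℝ} {x : ℝ} {n : ℕ} (hn : 0 < n) (hx : f^[n] x = x) :
    overRotNum f x = (∑ i ∈ Finset.range n, chi f (f^[i] x)) / n := by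
  have hper : IsPeriodicPt f n x := hx
  obtain ⟨k, rfl⟩ := hper.minimalPeriod_dvd
  have hk : k ≠ 0 := (Nat.pos_of_mul_pos_left hn).ne'
  have hsum : ∀ k : ℕ, birkhoffSum f (chi f) (minimalPeriod f x * k) x =
      k * birkhoffSum f (chi f) (minimalPeriod f x) x := fun k => by
    induction k with
    | zero => simp only [mul_zero, birkhoffSum_zero, Nat.cast_zero, zero_mul]
    | succ k ih =>
      rw [mul_add_one, birkhoffSum_add, ih, (isPeriodicPt_minimalPeriod f x).mul_const k,
        Nat.cast_succ, add_one_mul]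
  rw [overRotNum]
  change birkhoffSum f (chi f) _ x / _ = birkhoffSum f (chi f) _ x / _
  rw [hsum, Nat.cast_mul, mul_comm (minimalPeriod f x : ℝ),
    mul_div_mul_left _ _ (Nat.cast_ne_zero.2 hk)]

lemma overRotNum_eq_half {f : ℝ → ℝ} {x : ℝ} {n : ℕ} (hn : 0 < n) (hx : f^[n] x = x)
    (h : ∀ i < n, chi f (f^[i] x) = 1 / 2) : overRotNum f x = 1 / 2 := by
  rw [overRotNum_eq_of_iterate_eq hn hx,
    Finset.sum_congr rfl fun i hi => h i (Finset.mem_range.1 hi), Finset.sum_const,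
    Finset.card_range, nsmul_eq_mul, mul_div_cancel_left₀ _ (Nat.cast_ne_zero.2 hn.ne')]

lemma overRotNum_eq_half_of_iterate_two_eq {f : ℝ → ℝ} {x : ℝ} (hx : f^[2] x = x) :
    overRotNum f x = 1 / 2 := by
  have hper : IsPeriodicPt f 2 x := hx
  refine overRotNum_eq_half two_pos hx fun i _ => if_pos ?_
  have hi : f (f (f^[i] x)) = f^[i] x := hper.apply_iterate i
  rw [hi, ← neg_sub (f (f^[i] x)), mul_neg]
  exact neg_nonpos.2 (mul_self_nonneg _)

namespace HasUniqueFixedPoint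

variable {f g : ℝ → ℝ} {i₁ i₂ j₁ j₂ a x z : ℝ} {n : ℕ}

lemma chi_eq_half (H : HasUniqueFixedPoint f i₁ i₂ a) (hx : x ∈ Icc i₁ i₂)
    (hopp : OppositeSides a x (f x)) : chi f x = 1 / 2 := by
  refine if_pos (mul_nonpos_iff.2 ?_)
  have hlt := H.lt_map (H.maps hx)
  have hgt := H.map_lt (H.maps hx)
  grind [OppositeSides]

lemma chi_eq_zero (H : HasUniqueFixedPoint f i₁ i₂ a) (hx : x ∈ Icc i₁ i₂)
    (hside : SameSide a x (f x)) : chi f x = 0 := by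
  refine if_neg (not_le.2 (mul_pos_iff.2 ?_))
  have hlt := H.lt_map hx
  have hgt := H.map_lt hx
  have hlt' := H.lt_map (H.maps hx)
  have hgt' := H.map_lt (H.maps hx)
  grind [SameSide]

lemma overRotNum_eq_half_of_alternates (H : HasUniqueFixedPoint f i₁ i₂ a) (hx : x ∈ Icc i₁ i₂)
    (hn : 0 < n) (hxn : f^[n] x = x) (halt : Alternates f a x n) : overRotNum f x = 1 / 2 :=
  overRotNum_eq_half hn hxn fun i hi =>
    H.chi_eq_half (H.maps.iterate i hx) (by simpa only [iterate_succ_apply'] using halt i hi)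

lemma overRotNum_eq_of_same_itinerary (Hg : HasUniqueFixedPoint g i₁ i₂ a)
    (Hf : HasUniqueFixedPoint f j₁ j₂ a) (hx : x ∈ Icc i₁ i₂) (hz : z ∈ Icc j₁ j₂) (hn : 0 < n)
    (hxn : g^[n] x = x) (hzn : f^[n] z = z) (hside : ∀ i ≤ n, SameSide a (f^[i] z) (g^[i] x)) :
    overRotNum f z = overRotNum g x := by
  rw [overRotNum_eq_of_iterate_eq hn hxn, overRotNum_eq_of_iterate_eq hn hzn]
  congr 1
  refine Finset.sum_congr rfl fun i hi => ?_
  have hzi := Hf.maps.iterate i hz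
  have hxi := Hg.maps.iterate i hx
  have hin := Finset.mem_range.1 hi
  have hsame := hside i hin.le
  have hnext := hside (i + 1) hin
  rw [iterate_succ_apply', iterate_succ_apply'] at hnext
  have hza : f^[i] z ≠ a ∧ f (f^[i] z) ≠ a := by grind [SameSide]
  rcases sameSide_or_oppositeSides hza.1 hza.2 with hstay | hcross
  · rw [Hf.chi_eq_zero hzi hstay, Hg.chi_eq_zero hxi (by grind [SameSide])]
  · rw [Hf.chi_eq_half hzi hcross, Hg.chi_eq_half hxi ((oppositeSides_congr hsame hnext).1 hcross)]

lemma uIcc_subset_image_of_closest (Hg : HasUniqueFixedPoint g i₁ i₂ a)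
    (Hf : HasUniqueFixedPoint f j₁ j₂ a) (hIJ : Icc i₁ i₂ ⊆ Icc j₁ j₂)
    (hrep : ∀ x ∈ Icc i₁ i₂, ∀ y ∈ uIcc x a, g y = g x →
      (∀ z ∈ uIcc x a, g z = g x → |y - a| ≤ |z - a|) → uIcc (g y) a ⊆ uIcc (f y) a) :
    ∀ x ∈ Icc i₁ i₂, uIcc a (g x) ⊆ f '' uIcc a x := fun x hx => by
  have hsub : uIcc x a ⊆ Icc i₁ i₂ := uIcc_comm a x ▸ Hg.uIcc_subset hx
  obtain ⟨y, hy, hgy, hclosest⟩ := exists_closest (Hg.cont.mono hsub)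
  calc uIcc a (g x) = uIcc (g y) a := by rw [hgy, uIcc_comm]
    _ ⊆ uIcc a (f y) := uIcc_comm a (f y) ▸ hrep x hx y hy hgy hclosest
    _ ⊆ f '' uIcc a y := Hf.uIcc_subset_image (hIJ (hsub hy))
    _ ⊆ f '' uIcc a x := image_mono (uIcc_subset_uIcc_left (uIcc_comm a x ▸ hy))

variable (Hg : HasUniqueFixedPoint g i₁ i₂ a) (Hf : HasUniqueFixedPoint f j₁ j₂ a)
  (hIJ : Icc i₁ i₂ ⊆ Icc j₁ j₂) (hcov : ∀ x ∈ Icc i₁ i₂, uIcc a (g x) ⊆ f '' uIcc a x)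

include Hg Hf hIJ hcov

lemma exists_same_itinerary_or_exists_iterate_two_eq (hx : x ∈ Icc i₁ i₂) (hn : 0 < n)
    (hxn : g^[n] x = x) (hxa : x ≠ a) :
    (∃ z ∈ Icc j₁ j₂, f^[n] z = z ∧ ∀ i ≤ n, SameSide a (f^[i] z) (g^[i] x)) ∨
      Alternates g a x n ∧ ∃ z ∈ Icc j₁ j₂, z ≠ a ∧ f^[2] z = z := by
  obtain ⟨w, hwn, hw⟩ := exists_iterate_eq_of_uIcc_subset_image Hg.maps hcov n hx
    (hxn.symm ▸ right_mem_uIcc : x ∈ uIcc a (g^[n] x))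
  have hret : w ∈ uIcc a (f^[n] w) := hwn.symm ▸ hw 0 n.zero_le
  have hwJ : w ∈ Icc j₁ j₂ := hIJ (Hg.uIcc_subset hx (hw 0 n.zero_le))
  have hwna : f^[n] w ≠ a := by rwa [hwn]
  have hwa : w ≠ a := iterate_ne_of_le Hf.fixed hwna n.zero_le
  have hside : ∀ i ≤ n, SameSide a (f^[i] w) (g^[i] x) := fun i hi =>
    sameSide_of_mem_uIcc (hw i hi) (iterate_ne_of_le Hf.fixed hwna hi)
  refine (Hf.exists_same_itinerary_or_alternates hwJ hwa hn hret).imp ?_ fun halt => ?_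
  · rintro ⟨z, hz, hzn, hzw⟩
    exact ⟨z, hz, hzn, fun i hi => (hzw i hi).trans (hside i hi)⟩
  · exact ⟨halt.congr fun i hi => (hside i hi).symm, Hf.exists_iterate_two_eq hwJ hwa hn hret halt⟩

lemma exists_iterate_eq_of_odd (hx : x ∈ Icc i₁ i₂) (hn : Odd n) (hxn : g^[n] x = x)
    (hxa : x ≠ a) : ∃ z ∈ Icc j₁ j₂, f^[n] z = z ∧ z ≠ a := by
  rcases Hg.exists_same_itinerary_or_exists_iterate_two_eq Hf hIJ hcov hx hn.pos hxn hxa with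
    ⟨z, hz, hzn, hside⟩ | ⟨halt, -⟩
  · exact ⟨z, hz, hzn, (hside 0 n.zero_le).left_ne⟩
  · exact absurd (halt.even_of_iterate_eq hxa hxn) (Nat.not_even_iff_odd.2 hn)

lemma overRotInterval_subset : overRotInterval g (Icc i₁ i₂) ⊆ overRotInterval f (Icc j₁ j₂) := by
  refine closure_mono ?_
  rintro _ ⟨x, hx, hxper, hgx, rfl⟩
  have hn := minimalPeriod_pos_of_mem_periodicPts hxper
  have hxn : g^[minimalPeriod g x] x = x := iterate_minimalPeriod
  have hxa : x ≠ a := by rintro rfl; exact hgx Hg.fixed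
  rcases Hg.exists_same_itinerary_or_exists_iterate_two_eq Hf hIJ hcov hx hn hxn hxa with
    ⟨z, hz, hzn, hside⟩ | ⟨halt, z, hz, hza, hz₂⟩
  · exact ⟨z, hz, mk_mem_periodicPts hn hzn,
      fun h => (hside 0 (Nat.zero_le _)).left_ne (Hf.uniq z hz h),
      Hg.overRotNum_eq_of_same_itinerary Hf hx hz hn hxn hzn hside⟩
  · exact ⟨z, hz, mk_mem_periodicPts two_pos hz₂, fun h => hza (Hf.uniq z hz h),
      (overRotNum_eq_half_of_iterate_two_eq hz₂).trans
        (Hg.overRotNum_eq_half_of_alternates hx hn hxn halt).symm⟩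

lemma exists_minimalPeriod_eq_minimalPeriod (hx : x ∈ Icc i₁ i₂) (hxper : x ∈ periodicPts g)
    (hodd : ∃ y ∈ Icc i₁ i₂, Odd (minimalPeriod g y) ∧ 1 < minimalPeriod g y) :
    ∃ z ∈ Icc j₁ j₂, z ∈ periodicPts f ∧ minimalPeriod f z = minimalPeriod g x := by
  have hforce : ∀ y ∈ Icc i₁ i₂, Odd (minimalPeriod g y) → minimalPeriod g y ≠ 1 →
      ∃ z ∈ Icc j₁ j₂, f^[minimalPeriod g y] z = z ∧ z ≠ a := fun y hy hyodd hy₁ =>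
    Hg.exists_iterate_eq_of_odd Hf hIJ hcov hy hyodd iterate_minimalPeriod <| by
      rintro rfl
      exact hy₁ (minimalPeriod_eq_one_iff_isFixedPt.2 Hg.fixed)
  rcases Nat.even_or_odd (minimalPeriod g x) with heven | hodd'
  · obtain ⟨y, hy, hyodd, hy₁⟩ := hodd
    obtain ⟨z, hz, hzn, hza⟩ := hforce y hy hyodd hy₁.ne'
    have hpos := minimalPeriod_pos_of_mem_periodicPts hxper
    obtain ⟨m, hm⟩ := even_iff_exists_two_mul.1 heven
    rw [hm]
    exact Hf.exists_minimalPeriod_eq_two_mul hz hyodd hzn hza (by omega)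
  · by_cases h₁ : minimalPeriod g x = 1
    · refine ⟨a, Hf.mem, mk_mem_periodicPts one_pos Hf.fixed, ?_⟩
      rw [h₁, minimalPeriod_eq_one_iff_isFixedPt]
      exact Hf.fixed
    · obtain ⟨z, hz, hzn, hza⟩ := hforce x hx hodd' h₁
      exact Hf.exists_minimalPeriod_eq_of_odd hz hodd' hzn hza hodd' le_rfl

end HasUniqueFixedPoint

theorem stmt7_general {i₁ i₂ j₁ j₂ a : ℝ} {g f : ℝ → ℝ} (Hg : HasUniqueFixedPoint g i₁ i₂ a)
    (Hf : HasUniqueFixedPoint f j₁ j₂ a) (hIJ : Icc i₁ i₂ ⊆ Icc j₁ j₂)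
    (hcov : ∀ x ∈ Icc i₁ i₂, uIcc a (g x) ⊆ f '' uIcc a x) :
    overRotInterval g (Icc i₁ i₂) ⊆ overRotInterval f (Icc j₁ j₂) ∧
    ((∃ y ∈ Icc i₁ i₂, y ∈ periodicPts g ∧ Odd (minimalPeriod g y) ∧ 1 < minimalPeriod g y) →
      {n : ℕ | ∃ x ∈ Icc i₁ i₂, x ∈ periodicPts g ∧ minimalPeriod g x = n} ⊆
      {n : ℕ | ∃ x ∈ Icc j₁ j₂, x ∈ periodicPts f ∧ minimalPeriod f x = n}) := by
  refine ⟨Hg.overRotInterval_subset Hf hIJ hcov, ?_⟩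
  rintro ⟨y, hy, -, hodd⟩ _ ⟨x, hx, hxper, rfl⟩
  exact Hg.exists_minimalPeriod_eq_minimalPeriod Hf hIJ hcov hx hxper ⟨y, hy, hodd⟩

theorem stmt7 (i1 i2 j1 j2 a : ℝ) (g f : ℝ → ℝ)
    (hi : i1 ≤ i2) (hj : j1 ≤ j2) (hIJ : Set.Icc i1 i2 ⊆ Set.Icc j1 j2)
    (hgc : ContinuousOn g (Set.Icc i1 i2)) (hgm : Set.MapsTo g (Set.Icc i1 i2) (Set.Icc i1 i2))
    (hgpm : PiecewiseMonotoneOn g i1 i2)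
    (hfc : ContinuousOn f (Set.Icc j1 j2)) (hfm : Set.MapsTo f (Set.Icc j1 j2) (Set.Icc j1 j2))
    (hfpm : PiecewiseMonotoneOn f j1 j2)
    (ha : a ∈ Set.Icc i1 i2)
    (hga : g a = a) (hguniq : ∀ x ∈ Set.Icc i1 i2, g x = x → x = a)
    (hfa : f a = a) (hfuniq : ∀ x ∈ Set.Icc j1 j2, f x = x → x = a)
    (hnotmax : ¬ IsLocalMaxOn g (Set.Icc i1 i2) a)
    (hnotmin : ¬ IsLocalMinOn g (Set.Icc i1 i2) a)
    -- f is more repellent from a than g on B = ψ_g(I): for every x ∈ I and every point y of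
    -- the interval with endpoints x and a closest to a with g(y) = g(x), the interval with
    -- endpoints f(y) and a contains the interval with endpoints g(y) and a.
    (hrep : ∀ x ∈ Set.Icc i1 i2, ∀ y ∈ Set.uIcc x a, g y = g x →
      (∀ z ∈ Set.uIcc x a, g z = g x → |y - a| ≤ |z - a|) →
      Set.uIcc (g y) a ⊆ Set.uIcc (f y) a) :
    overRotInterval g (Set.Icc i1 i2) ⊆ overRotInterval f (Set.Icc j1 j2) ∧
    ((∃ y ∈ Set.Icc i1 i2, y ∈ Function.periodicPts g ∧ Odd (Function.minimalPeriod g y) ∧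
        1 < Function.minimalPeriod g y) →
      {n : ℕ | ∃ x ∈ Set.Icc i1 i2, x ∈ Function.periodicPts g ∧ Function.minimalPeriod g x = n}
        ⊆
      {n : ℕ | ∃ x ∈ Set.Icc j1 j2, x ∈ Function.periodicPts f ∧
        Function.minimalPeriod f x = n}) := by
  have Hg : HasUniqueFixedPoint g i1 i2 a := ⟨hgc, hgm, ha, hga, hguniq⟩
  have Hf : HasUniqueFixedPoint f j1 j2 a := ⟨hfc, hfm, hIJ ha, hfa, hfuniq⟩
  exact stmt7_general Hg Hf hIJ (Hg.uIcc_subset_image_of_closest Hf hIJ hrep)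
end
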